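/- For q ≥ 3 there exist subspaces V_[1], V_[2] of V_[S], invariant under φ⊗², each carrying an irreducible subrepresentation of φ⊗², with dim V_[1] = (d²−1)·[(d/2)(d/2+1)/2 − 1] and dim V_[2] = (d²−1)·[(d/2)(d/2−1)/2 − 1], such that V_[S] is the orthogonal direct sum V_[adj] ⊕ V_[1] ⊕ V_[2], and V_[adj], V_[1], V_[2] carry pairwise inequivalent subrepresentations. For q = 2 the same holds with V_[2] = 0, i.e. V_[S] = V_[adj] ⊕ V_[1] with V_[1] invariant and irreducible; for q = 1, V_[S] = 0. -/

import Mathlib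

open Matrix MeasureTheory
open scoped Kronecker

noncomputable section

namespace CliffordPaper

/-- The single-qubit Pauli matrices `1, X, Y, Z`. -/
def pauli1 : Fin 4 → Matrix (Fin 2) (Fin 2) ℂ :=
  ![1, !![0, 1; 1, 0], !![0, -Complex.I; Complex.I, 0], !![1, 0; 0, -1]]

/-- Index type for the computational basis of `q` qubits. -/
abbrev Idx (q : ℕ) := Fin q → Fin 2

/-- The space `M_d` of `d × d` complex matrices, `d = 2^q`. -/
abbrev Mat (q : ℕ) := Matrix (Idx q) (Idx q) ℂ

/-- The space `M_d ⊗ M_d`, realized as matrices indexed by the product index set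
(the tensor factors combine via the Kronecker product `⊗ₖ`). -/
abbrev BMat (q : ℕ) := Matrix (Idx q × Idx q) (Idx q × Idx q) ℂ

/-- The `q`-fold Kronecker product of single-qubit Paulis with labels `a`. -/
def PauliOp {q : ℕ} (a : Fin q → Fin 4) : Mat q :=
  Matrix.of fun x y => ∏ i, pauli1 (a i) (x i) (y i)

/-- `√d` as a complex number, where `d = 2^q`. -/
def sqrtd (q : ℕ) : ℂ := (Real.sqrt (2 ^ q) : ℝ)

/-- The set `σ̂_q` of normalized Pauli operators. -/
def sigmaHat (q : ℕ) : Set (Mat q) :=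
  {M | ∃ a : Fin q → Fin 4, M = (sqrtd q)⁻¹ • PauliOp a}

/-- The normalized identity `σ₀ = 1/√d`. -/
def sigma0 (q : ℕ) : Mat q := (sqrtd q)⁻¹ • (1 : Mat q)

/-- `σ_q = σ̂_q \ {σ₀}`. -/
def sigmaSet (q : ℕ) : Set (Mat q) := sigmaHat q \ {sigma0 q}

/-- `N_τ`: the normalized nonidentity Paulis anticommuting with `τ`. -/
def NSet {q : ℕ} (τ : Mat q) : Set (Mat q) :=
  {σ | σ ∈ sigmaSet q ∧ σ * τ + τ * σ = 0}

/-- `C_τ`: the normalized nonidentity Paulis distinct from `τ` commuting with `τ`. -/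
def CSet {q : ℕ} (τ : Mat q) : Set (Mat q) :=
  {σ | σ ∈ sigmaSet q ∧ σ ≠ τ ∧ σ * τ = τ * σ}

/-- `Ĉ_τ`: the normalized Paulis commuting with `τ`. -/
def CHatSet {q : ℕ} (τ : Mat q) : Set (Mat q) :=
  {σ | σ ∈ sigmaHat q ∧ σ * τ = τ * σ}

/-- The normalized product `σ·τ = √d στ`. -/
def nprod {q : ℕ} (σ τ : Mat q) : Mat q := sqrtd q • (σ * τ)

/-- The Clifford normalizer `𝒩_q`: unitaries mapping normalized Paulis to
signed normalized Paulis under conjugation. -/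
def Cliff (q : ℕ) : Set (Mat q) :=
  {U | U ∈ Matrix.unitaryGroup (Idx q) ℂ ∧
    ∀ σ ∈ sigmaHat q, ∃ τ ∈ sigmaHat q, U * σ * Uᴴ = τ ∨ U * σ * Uᴴ = -τ}

/-- The two-copy representation `φ⊗²(U) : A ⊗ B ↦ (UAU†) ⊗ (UBU†)`, extended linearly. -/
def twoCopy {q : ℕ} (U : Mat q) : BMat q →ₗ[ℂ] BMat q where
  toFun M := (U ⊗ₖ U) * M * (U ⊗ₖ U)ᴴ
  map_add' M N := by
    show (U ⊗ₖ U) * (M + N) * (U ⊗ₖ U)ᴴ = (U ⊗ₖ U) * M * (U ⊗ₖ U)ᴴ + (U ⊗ₖ U) * N * (U ⊗ₖ U)ᴴ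
    rw [Matrix.mul_add, Matrix.add_mul]
  map_smul' c M := by
    show (U ⊗ₖ U) * (c • M) * (U ⊗ₖ U)ᴴ = c • ((U ⊗ₖ U) * M * (U ⊗ₖ U)ᴴ)
    rw [Matrix.mul_smul, Matrix.smul_mul]

/-- The Hilbert–Schmidt inner product `⟨A, B⟩ = tr(A† B)`. -/
def hs {q : ℕ} (A B : BMat q) : ℂ := (Aᴴ * B).trace

/-- A subspace is invariant under the two-copy representation of `𝒩_q`. -/
def IsInvariant (q : ℕ) (W : Submodule ℂ (BMat q)) : Prop :=
  ∀ U ∈ Cliff q, ∀ v ∈ W, twoCopy U v ∈ W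

/-- A nonzero invariant subspace carries an irreducible subrepresentation. -/
def CarriesIrred (q : ℕ) (W : Submodule ℂ (BMat q)) : Prop :=
  W ≠ ⊥ ∧ IsInvariant q W ∧ ∀ W' ≤ W, IsInvariant q W' → W' = ⊥ ∨ W' = W

/-- Two invariant subspaces carry equivalent subrepresentations: there is a linear
isomorphism between them intertwining the two-copy representation. -/
def EquivRep (q : ℕ) (W W' : Submodule ℂ (BMat q)) : Prop :=
  ∃ T : BMat q →ₗ[ℂ] BMat q, Submodule.map T W = W' ∧
    (∀ x ∈ W, T x = 0 → x = 0) ∧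
    ∀ U ∈ Cliff q, ∀ x ∈ W, T (twoCopy U x) = twoCopy U (T x)

/-- `S_{σ,τ} = (σ⊗τ + τ⊗σ)/√2`. -/
def SVec {q : ℕ} (σ τ : Mat q) : BMat q :=
  ((Real.sqrt 2 : ℂ))⁻¹ • (σ ⊗ₖ τ + τ ⊗ₖ σ)

/-- `A_{σ,τ} = (σ⊗τ − τ⊗σ)/√2`. -/
def AVec {q : ℕ} (σ τ : Mat q) : BMat q :=
  ((Real.sqrt 2 : ℂ))⁻¹ • (σ ⊗ₖ τ - τ ⊗ₖ σ)

/-- The trivial sector `V_id`. -/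
def Vid (q : ℕ) : Submodule ℂ (BMat q) :=
  Submodule.span ℂ {sigma0 q ⊗ₖ sigma0 q}

/-- The right adjoint sector `V_r`. -/
def Vr (q : ℕ) : Submodule ℂ (BMat q) :=
  Submodule.span ℂ {M | ∃ τ ∈ sigmaSet q, M = sigma0 q ⊗ₖ τ}

/-- The left adjoint sector `V_l`. -/
def Vl (q : ℕ) : Submodule ℂ (BMat q) :=
  Submodule.span ℂ {M | ∃ τ ∈ sigmaSet q, M = τ ⊗ₖ sigma0 q}

/-- The diagonal sector `V_d`. -/
def Vdiag (q : ℕ) : Submodule ℂ (BMat q) :=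
  Submodule.span ℂ {M | ∃ τ ∈ sigmaSet q, M = τ ⊗ₖ τ}

/-- The symmetric commuting sector `V_[S]`. -/
def VScom (q : ℕ) : Submodule ℂ (BMat q) :=
  Submodule.span ℂ {M | ∃ τ ∈ sigmaSet q, ∃ σ ∈ CSet τ, M = SVec σ τ}

/-- The symmetric anti-commuting sector `V_{S}`. -/
def VSanti (q : ℕ) : Submodule ℂ (BMat q) :=
  Submodule.span ℂ {M | ∃ τ ∈ sigmaSet q, ∃ σ ∈ NSet τ, M = SVec σ τ}

/-- The antisymmetric commuting sector `V_[A]`. -/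
def VAcom (q : ℕ) : Submodule ℂ (BMat q) :=
  Submodule.span ℂ {M | ∃ τ ∈ sigmaSet q, ∃ σ ∈ CSet τ, M = AVec σ τ}

/-- The antisymmetric anti-commuting sector `V_{A}`. -/
def VAanti (q : ℕ) : Submodule ℂ (BMat q) :=
  Submodule.span ℂ {M | ∃ τ ∈ sigmaSet q, ∃ σ ∈ NSet τ, M = AVec σ τ}

/-- `V_[A]` presented with the spanning vectors `A_{σ,σ·τ}`, `σ ∈ C_τ`. -/
def VAcom' (q : ℕ) : Submodule ℂ (BMat q) :=
  Submodule.span ℂ {M | ∃ τ ∈ sigmaSet q, ∃ σ ∈ CSet τ, M = AVec σ (nprod σ τ)}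

/-- `V_0 = span{Σ_{σ∈σ_q} σ⊗σ}`. -/
def V0diag (q : ℕ) : Submodule ℂ (BMat q) :=
  Submodule.span ℂ {∑ᶠ σ ∈ sigmaSet q, σ ⊗ₖ σ}

/-- `V_1`, the "positive" part of the diagonal sector. -/
def V1diag (q : ℕ) : Submodule ℂ (BMat q) :=
  Submodule.span ℂ {v | ∃ lam : Mat q → ℂ,
    v = ∑ᶠ σ ∈ sigmaSet q, lam σ • (σ ⊗ₖ σ) ∧
    (∑ᶠ σ ∈ sigmaSet q, lam σ) = 0 ∧
    ∀ τ ∈ sigmaSet q, (∑ᶠ σ ∈ NSet τ, lam σ) = -((2 ^ q : ℂ) / 2) * lam τ}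

/-- `V_2`, the "negative" part of the diagonal sector. -/
def V2diag (q : ℕ) : Submodule ℂ (BMat q) :=
  Submodule.span ℂ {v | ∃ lam : Mat q → ℂ,
    v = ∑ᶠ σ ∈ sigmaSet q, lam σ • (σ ⊗ₖ σ) ∧
    (∑ᶠ σ ∈ sigmaSet q, lam σ) = 0 ∧
    ∀ τ ∈ sigmaSet q, (∑ᶠ σ ∈ NSet τ, lam σ) = ((2 ^ q : ℂ) / 2) * lam τ}

/-- `v^[adj]_τ = (2|C_τ|)^{-1/2} Σ_{σ∈C_τ} S_{σ,σ·τ}`. -/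
def vadjS {q : ℕ} (τ : Mat q) : BMat q :=
  ((Real.sqrt (2 * ((CSet τ).ncard : ℝ)) : ℂ))⁻¹ • ∑ᶠ σ ∈ CSet τ, SVec σ (nprod σ τ)

/-- `v^{adj}_τ = (2|N_τ|)^{-1/2} Σ_{σ∈N_τ} A_{σ,iσ·τ}`. -/
def vadjA {q : ℕ} (τ : Mat q) : BMat q :=
  ((Real.sqrt (2 * ((NSet τ).ncard : ℝ)) : ℂ))⁻¹ •
    ∑ᶠ σ ∈ NSet τ, AVec σ (Complex.I • nprod σ τ)

/-- The symmetric adjoint sector `V_[adj]`. -/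
def VadjS (q : ℕ) : Submodule ℂ (BMat q) :=
  Submodule.span ℂ {M | ∃ τ ∈ sigmaSet q, M = vadjS τ}

/-- The antisymmetric adjoint sector `V_{adj}`. -/
def VadjA (q : ℕ) : Submodule ℂ (BMat q) :=
  Submodule.span ℂ {M | ∃ τ ∈ sigmaSet q, M = vadjA τ}

/-- The orthogonal complement `V^⊥_{adj}` of `V_{adj}` inside `V_{A}`. -/
def VadjAperp (q : ℕ) : Submodule ℂ (BMat q) :=
  Submodule.span ℂ {v | v ∈ VAanti q ∧ ∀ w ∈ VadjA q, hs w v = 0}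

/-- `V_{1}^τ`. -/
def V1symτ (q : ℕ) (τ : Mat q) : Submodule ℂ (BMat q) :=
  Submodule.span ℂ {v | ∃ lam : Mat q → ℂ,
    v = ∑ᶠ σ ∈ NSet τ, lam σ • SVec σ (Complex.I • nprod σ τ) ∧
    ∀ ν ∈ NSet τ, (∑ᶠ σ ∈ NSet τ ∩ CSet ν, lam σ) - (∑ᶠ σ ∈ NSet τ ∩ NSet ν, lam σ)
      = ((2 ^ q : ℂ) / 2) * lam ν}

/-- `V_{2}^τ`. -/
def V2symτ (q : ℕ) (τ : Mat q) : Submodule ℂ (BMat q) :=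
  Submodule.span ℂ {v | ∃ lam : Mat q → ℂ,
    v = ∑ᶠ σ ∈ NSet τ, lam σ • SVec σ (Complex.I • nprod σ τ) ∧
    ∀ ν ∈ NSet τ, (∑ᶠ σ ∈ NSet τ ∩ CSet ν, lam σ) - (∑ᶠ σ ∈ NSet τ ∩ NSet ν, lam σ)
      = -((2 ^ q : ℂ) / 2) * lam ν}

/-- `V_{1} = ⊕_τ V_{1}^τ`. -/
def V1sym (q : ℕ) : Submodule ℂ (BMat q) := ⨆ τ ∈ sigmaSet q, V1symτ q τ

/-- `V_{2} = ⊕_τ V_{2}^τ`. -/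
def V2sym (q : ℕ) : Submodule ℂ (BMat q) := ⨆ τ ∈ sigmaSet q, V2symτ q τ

/-- The defining property of the map `Θ` on `V_[A]`. -/
def ThetaProp (q : ℕ) (Θ : BMat q →ₗ[ℂ] BMat q) : Prop :=
  ∀ τ ∈ sigmaSet q, ∀ σ ∈ CSet τ,
    Θ (AVec σ (nprod σ τ)) =
      (∑ᶠ σ' ∈ NSet τ ∩ CSet σ, AVec σ' (Complex.I • nprod σ' τ)) -
      ∑ᶠ σ' ∈ NSet τ ∩ NSet σ, AVec σ' (Complex.I • nprod σ' τ)

/-- `V` = span of off-diagonal products `σ⊗σ̂`, `σ ≠ σ̂`. -/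
def Voff (q : ℕ) : Submodule ℂ (BMat q) :=
  Submodule.span ℂ {M | ∃ σ ∈ sigmaSet q, ∃ σ' ∈ sigmaSet q, σ ≠ σ' ∧ M = σ ⊗ₖ σ'}

/-- `V^τ` = span of the `σ⊗σ̂` with `σ·σ̂ ∈ {τ, −τ, iτ, −iτ}`. -/
def Vtau (q : ℕ) (τ : Mat q) : Submodule ℂ (BMat q) :=
  Submodule.span ℂ {M | ∃ σ ∈ sigmaSet q, ∃ σ' ∈ sigmaSet q,
    (nprod σ σ' = τ ∨ nprod σ σ' = -τ ∨ nprod σ σ' = Complex.I • τ ∨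
      nprod σ σ' = -(Complex.I • τ)) ∧ M = σ ⊗ₖ σ'}


abbrev E (q : ℕ) := Fin q → ZMod 2 × ZMod 2

def lab : ZMod 2 × ZMod 2 → Fin 4 := fun a =>
  if a = (0, 0) then 0 else if a = (1, 0) then 1 else if a = (1, 1) then 2 else 3

lemma lab_bij : Function.Bijective lab := by decide

def chi (x : ZMod 2) : ℂ := if x = 0 then 1 else -1

lemma zcases (x : ZMod 2) : x = 0 ∨ x = 1 := by revert x; decide

@[simp] lemma chi_zero : chi 0 = 1 := by simp [chi]
@[simp] lemma chi_one : chi 1 = -1 := by simp [chi]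

lemma chi_add (x y : ZMod 2) : chi (x + y) = chi x * chi y := by
  rcases zcases x with h | h <;> rcases zcases y with h' | h' <;> subst h <;> subst h' <;> simp
  have : (1 + 1 : ZMod 2) = 0 := by decide
  simp [this]

lemma chi_sum {ι : Type*} (s : Finset ι) (f : ι → ZMod 2) :
    chi (∑ i ∈ s, f i) = ∏ i ∈ s, chi (f i) := by
  classical
  induction s using Finset.induction_on with
  | empty => simp
  | insert a s ha ih => rw [Finset.sum_insert ha, Finset.prod_insert ha, chi_add, ih]

lemma chi_sq (x : ZMod 2) : chi x * chi x = 1 := by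
  rcases zcases x with h | h <;> subst h <;> simp

lemma chi_inj {x y : ZMod 2} (h : chi x = chi y) : x = y := by
  rcases zcases x with h1 | h1 <;> rcases zcases y with h' | h' <;> subst h1 <;> subst h' <;>
    simp at h ⊢ <;> norm_num at h

lemma chi_star (x : ZMod 2) : (starRingEnd ℂ) (chi x) = chi x := by
  rcases zcases x with h | h <;> subst h <;> simp

def B1 (a b : ZMod 2 × ZMod 2) : ZMod 2 := a.1 * b.2 + a.2 * b.1

def B {q : ℕ} (a b : E q) : ZMod 2 := ∑ i, B1 (a i) (b i)

lemma B_comm {q : ℕ} (a b : E q) : B a b = B b a := by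
  unfold B B1
  exact Finset.sum_congr rfl fun i _ => by ring

lemma B_add_left {q : ℕ} (a b c : E q) : B (a + b) c = B a c + B b c := by
  unfold B B1
  rw [← Finset.sum_add_distrib]
  exact Finset.sum_congr rfl fun i _ => by simp; ring

lemma B_add_right {q : ℕ} (a b c : E q) : B a (b + c) = B a b + B a c := by
  rw [B_comm, B_add_left, B_comm b, B_comm c]

@[simp] lemma B_zero_left {q : ℕ} (c : E q) : B 0 c = 0 := by simp [B, B1]
@[simp] lemma B_zero_right {q : ℕ} (c : E q) : B c 0 = 0 := by simp [B, B1]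

@[simp] lemma B_self {q : ℕ} (c : E q) : B c c = 0 := by
  unfold B
  apply Finset.sum_eq_zero
  intro i _
  generalize c i = x
  revert x; decide

lemma E_add_self {q : ℕ} (a : E q) : a + a = 0 := by
  ext i
  · exact CharTwo.add_self_eq_zero _
  · exact CharTwo.add_self_eq_zero _

lemma E_add_add {q : ℕ} (a b : E q) : a + b + b = a := by
  rw [add_assoc, E_add_self, add_zero]

lemma E_eq_of_add {q : ℕ} {a b : E q} (h : a + b = 0) : a = b := by
  have := E_add_add a b
  rw [h, zero_add] at this; exact this.symm

/-- every functional is represented -/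
lemma exists_rep {q : ℕ} (h : E q →ₗ[ZMod 2] ZMod 2) : ∃ z : E q, ∀ x, B z x = h x := by
  refine ⟨fun i => (h (Pi.single i (0, 1)), h (Pi.single i (1, 0))), fun x => ?_⟩
  have hx : x = ∑ i, ((x i).1 • (Pi.single i (1, 0) : E q) + (x i).2 • (Pi.single i (0, 1) : E q)) := by
    ext j
    · simp only [Finset.sum_apply, Pi.add_apply, Pi.smul_apply, Prod.fst_sum, Prod.fst_add,
        Prod.smul_fst, Pi.single_apply]
      simp [apply_ite Prod.fst]
    · simp only [Finset.sum_apply, Pi.add_apply, Pi.smul_apply, Prod.snd_sum, Prod.snd_add,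
        Prod.smul_snd, Pi.single_apply]
      simp [apply_ite Prod.snd]
  conv_rhs => rw [hx]
  rw [map_sum]
  unfold B B1
  refine Finset.sum_congr rfl fun i _ => ?_
  simp only [map_add, map_smul, smul_eq_mul]
  ring

lemma exists_B_one {q : ℕ} {v : E q} (hv : v ≠ 0) : ∃ z, B z v = 1 := by
  obtain ⟨f, hf, _⟩ := Submodule.exists_le_ker_of_notMem (p := (⊥ : Submodule (ZMod 2) (E q)))
    (v := v) (by simpa using hv)
  obtain ⟨z, hz⟩ := exists_rep f
  refine ⟨z, ?_⟩
  rw [hz]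
  exact (zcases _).resolve_left hf

/-- symplectic transvection -/
def Tv {q : ℕ} (a x : E q) : E q := if B a x = 0 then x else x + a

lemma step {q : ℕ} (W : Submodule (ZMod 2) (E q)) {v w : E q} (hv : v ∉ W) (hw : w ∉ W)
    (h : ∀ y ∈ W, B v y = B w y) :
    ∃ a b, (∀ y ∈ W, B a y = 0) ∧ (∀ y ∈ W, B b y = 0) ∧ Tv b (Tv a v) = w := by
  have h2 : ∀ x : ZMod 2, x + x = 0 := by decide
  by_cases hvw : v = w
  · exact ⟨0, 0, by simp, by simp, by simp [Tv, hvw]⟩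
  rcases zcases (B v w) with h0 | h1
  · obtain ⟨h1, h1v, h1W⟩ := Submodule.exists_le_ker_of_notMem hv
    obtain ⟨h2', h2w, h2W⟩ := Submodule.exists_le_ker_of_notMem hw
    have h1v' := (zcases _).resolve_left h1v
    have h2w' := (zcases _).resolve_left h2w
    have : ∃ f : E q →ₗ[ZMod 2] ZMod 2, f v = 1 ∧ f w = 1 ∧ ∀ y ∈ W, f y = 0 := by
      rcases zcases (h1 w) with hh | hh
      · rcases zcases (h2' v) with hh' | hh'
        · exact ⟨h1 + h2', by simp [h1v', hh'], by simp [h2w', hh],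
            fun y hy => by simp [LinearMap.mem_ker.1 (h1W hy), LinearMap.mem_ker.1 (h2W hy)]⟩
        · exact ⟨h2', hh', h2w', fun y hy => LinearMap.mem_ker.1 (h2W hy)⟩
      · exact ⟨h1, h1v', hh, fun y hy => LinearMap.mem_ker.1 (h1W hy)⟩
    obtain ⟨f, fv, fw, fW⟩ := this
    obtain ⟨z', hz'⟩ := exists_rep f
    refine ⟨z', v + z' + w, fun y hy => by rw [hz', fW y hy], fun y hy => ?_, ?_⟩
    · rw [B_add_left, B_add_left, hz', fW y hy, h y hy, add_zero, h2]
    · have e1 : Tv z' v = v + z' := by simp [Tv, hz', fv]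
      have e2 : B (v + z' + w) (v + z') = 1 := by
        have fz : f z' = 0 := by rw [← hz', B_self]
        simp only [B_add_left, B_add_right, hz', fv, fw, fz, B_self, B_comm v z', B_comm w z',
          B_comm w v, h0]
        decide
      rw [e1, Tv, e2, if_neg (by decide), ← add_assoc, E_add_self, zero_add]
  · refine ⟨v + w, 0, fun y hy => ?_, by simp, ?_⟩
    · rw [B_add_left, h y hy, h2]
    · simp only [Tv, B_add_left, B_self, B_comm w v, h1]
      simp [← add_assoc, E_add_self]

lemma B_Tv {q : ℕ} (a x y : E q) : B (Tv a x) (Tv a y) = B x y := by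
  unfold Tv
  rcases zcases (B a x) with h | h <;> rcases zcases (B a y) with h' | h' <;>
    simp [h, h', B_add_left, B_add_right, B_comm x a]
  have : ∀ x : ZMod 2, x + 1 + 1 = x := by decide
  exact this _

lemma Tv_add {q : ℕ} (a x y : E q) : Tv a (x + y) = Tv a x + Tv a y := by
  unfold Tv
  have h11 : (1 + 1 : ZMod 2) = 0 := by decide
  rcases zcases (B a x) with h | h <;> rcases zcases (B a y) with h' | h' <;>
    simp [h, h', B_add_right, h11]
  · abel
  · abel
  · have := E_add_self a
    rw [add_add_add_comm, this, add_zero]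

lemma Tv_fix {q : ℕ} {a x : E q} (h : B a x = 0) : Tv a x = x := by simp [Tv, h]

lemma Tv_Tv {q : ℕ} (a x : E q) : Tv a (Tv a x) = x := by
  unfold Tv
  rcases zcases (B a x) with h | h <;> simp [h, B_add_right, E_add_add]

lemma Tv_inj {q : ℕ} (a : E q) : Function.Injective (Tv a) :=
  Function.LeftInverse.injective (Tv_Tv a)

lemma sum_chi {q : ℕ} (x : E q) : ∑ ν : E q, chi (B ν x) = if x = 0 then (4 : ℂ) ^ q else 0 := by
  split_ifs with h
  · subst h; simp
  · obtain ⟨z, hz⟩ := exists_B_one h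
    have : ∑ ν : E q, chi (B ν x) = ∑ ν : E q, chi (B (ν + z) x) :=
      (Equiv.sum_comp (Equiv.addRight z) (fun ν => chi (B ν x))).symm
    simp only [B_add_left, hz, chi_add, chi_one, ← Finset.sum_mul] at this
    linear_combination this / 2


lemma pauli_mul1 (a b : ZMod 2 × ZMod 2) : ∃ c : ℂ,
    pauli1 (lab a) * pauli1 (lab b) = c • pauli1 (lab (a + b)) ∧
    pauli1 (lab b) * pauli1 (lab a) = chi (B1 a b) • (pauli1 (lab a) * pauli1 (lab b)) ∧
    c * c = chi (B1 a b) ∧ (starRingEnd ℂ) c * c = 1 := by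
  have h11 : (1 + 1 : ZMod 2) = 0 := by decide
  have l0 : lab (0, 0) = 0 := by decide
  have l1 : lab (1, 0) = 1 := by decide
  have l2 : lab (1, 1) = 2 := by decide
  have l3 : lab (0, 1) = 3 := by decide
  have m0 : pauli1 0 = 1 := rfl
  have m1 : pauli1 1 = !![0, 1; 1, 0] := rfl
  have m2 : pauli1 2 = !![0, -Complex.I; Complex.I, 0] := rfl
  have m3 : pauli1 3 = !![1, 0; 0, -1] := rfl
  obtain ⟨a1, a2⟩ := a
  obtain ⟨b1, b2⟩ := b
  rcases zcases a1 with h | h <;> rcases zcases a2 with h' | h' <;>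
  rcases zcases b1 with k | k <;> rcases zcases b2 with k' | k' <;> subst h h' k k' <;>
  simp only [Prod.mk_add_mk, h11, add_zero, zero_add, B1, mul_zero, mul_one, l0, l1, l2, l3,
    m0, m1, m2, m3, chi_zero, chi_one]
  all_goals first
    | (refine ⟨1, ?_, ?_, ?_, ?_⟩ <;> simp [Matrix.one_fin_two]; done)
    | (refine ⟨Complex.I, ?_, ?_, ?_, ?_⟩ <;> simp [Matrix.one_fin_two]; done)
    | (refine ⟨-Complex.I, ?_, ?_, ?_, ?_⟩ <;> simp [Matrix.one_fin_two]; done)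

lemma pauli_herm1 (a : ZMod 2 × ZMod 2) (x y : Fin 2) :
    (starRingEnd ℂ) (pauli1 (lab a) y x) = pauli1 (lab a) x y := by
  generalize lab a = l
  fin_cases l <;> fin_cases x <;> fin_cases y <;> simp [pauli1]

lemma pauli_trace1 (a : ZMod 2 × ZMod 2) :
    ∑ x, pauli1 (lab a) x x = if a = 0 then 2 else 0 := by
  have l0 : lab (0, 0) = 0 := by decide
  have l1 : lab (1, 0) = 1 := by decide
  have l2 : lab (1, 1) = 2 := by decide
  have l3 : lab (0, 1) = 3 := by decide
  obtain ⟨a1, a2⟩ := a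
  rcases zcases a1 with h | h <;> rcases zcases a2 with h' | h' <;> subst h h' <;>
  simp [l0, l1, l2, l3, pauli1]

def P {q : ℕ} (a : E q) : Mat q := PauliOp (fun i => lab (a i))

def p {q : ℕ} (a : E q) : Mat q := (sqrtd q)⁻¹ • P a

lemma P_apply {q : ℕ} (a : E q) (x y : Idx q) : P a x y = ∏ i, pauli1 (lab (a i)) (x i) (y i) := rfl

lemma P_mul_apply {q : ℕ} (a b : E q) (x y : Idx q) :
    (P a * P b) x y = ∏ i, (pauli1 (lab (a i)) * pauli1 (lab (b i))) (x i) (y i) := by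
  simp only [Matrix.mul_apply, P_apply, ← Finset.prod_mul_distrib]
  rw [Finset.prod_univ_sum]
  simp [Fintype.piFinset_univ]

def om1 (a b : ZMod 2 × ZMod 2) : ℂ := (pauli_mul1 a b).choose

def om {q : ℕ} (a b : E q) : ℂ := ∏ i, om1 (a i) (b i)

lemma P_mul {q : ℕ} (a b : E q) : P a * P b = om a b • P (a + b) := by
  ext x y
  rw [P_mul_apply, Matrix.smul_apply, P_apply, om, smul_eq_mul, ← Finset.prod_mul_distrib]
  refine Finset.prod_congr rfl fun i _ => ?_
  rw [(pauli_mul1 (a i) (b i)).choose_spec.1]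
  rfl

lemma P_comm {q : ℕ} (a b : E q) : P b * P a = chi (B a b) • (P a * P b) := by
  ext x y
  rw [P_mul_apply, Matrix.smul_apply, P_mul_apply, B, chi_sum, smul_eq_mul,
    ← Finset.prod_mul_distrib]
  refine Finset.prod_congr rfl fun i _ => ?_
  rw [(pauli_mul1 (a i) (b i)).choose_spec.2.1]
  rfl

lemma om_sq {q : ℕ} (a b : E q) : om a b * om a b = chi (B a b) := by
  rw [om, ← Finset.prod_mul_distrib, B, chi_sum]
  exact Finset.prod_congr rfl fun i _ => (pauli_mul1 (a i) (b i)).choose_spec.2.2.1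

lemma om_star {q : ℕ} (a b : E q) : (starRingEnd ℂ) (om a b) * om a b = 1 := by
  rw [om, map_prod, ← Finset.prod_mul_distrib]
  exact Finset.prod_eq_one fun i _ => (pauli_mul1 (a i) (b i)).choose_spec.2.2.2

lemma om_ne {q : ℕ} (a b : E q) : om a b ≠ 0 := fun h => by
  have := om_star a b
  simp [h] at this

lemma P_herm {q : ℕ} (a : E q) : (P a)ᴴ = P a := by
  ext x y
  rw [Matrix.conjTranspose_apply, P_apply, P_apply, ← starRingEnd_apply, map_prod]
  exact Finset.prod_congr rfl fun i _ => pauli_herm1 _ _ _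

lemma P_zero {q : ℕ} : P (0 : E q) = 1 := by
  have l0 : lab 0 = 0 := by decide
  ext x y
  rw [P_apply]
  simp only [Pi.zero_apply, l0]
  have m0 : pauli1 0 = 1 := rfl
  rw [m0]
  by_cases h : x = y
  · subst h; simp
  · rw [Matrix.one_apply_ne h]
    obtain ⟨i, hi⟩ := Function.ne_iff.1 h
    exact Finset.prod_eq_zero (Finset.mem_univ i) (Matrix.one_apply_ne hi)

lemma P_trace {q : ℕ} (a : E q) : (P a).trace = if a = 0 then (2 : ℂ) ^ q else 0 := by
  have : (P a).trace = ∏ i, ∑ x, pauli1 (lab (a i)) x x := by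
    rw [Finset.prod_univ_sum, Fintype.piFinset_univ]; rfl
  rw [this]
  simp only [pauli_trace1]
  split_ifs with h
  · subst h; simp
  · obtain ⟨i, hi⟩ := Function.ne_iff.1 h
    exact Finset.prod_eq_zero (Finset.mem_univ i) (if_neg hi)

lemma P_sq {q : ℕ} (a : E q) : P a * P a = 1 := by
  have h : om a a * om a a = 1 := by rw [om_sq]; simp
  -- use positivity of the trace
  have h2 := P_mul a a
  rw [E_add_self, P_zero] at h2
  have h3 : om a a = 1 := by
    have : om a a = ∏ i, om1 (a i) (a i) := rfl
    rw [this]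
    refine Finset.prod_eq_one fun i _ => ?_
    have h4 := (pauli_mul1 (a i) (a i)).choose_spec.1
    change _ = om1 (a i) (a i) • _ at h4
    generalize a i = x at h4 ⊢
    have h5 : x + x = (0, 0) := by clear h4; revert x; decide
    have l0 : lab (0, 0) = 0 := by decide
    have m0 : pauli1 0 = 1 := rfl
    rw [h5, l0, m0] at h4
    have h6 : pauli1 (lab x) * pauli1 (lab x) = 1 := by
      generalize lab x = l
      fin_cases l <;> simp [pauli1, Matrix.one_fin_two]
    rw [h6] at h4
    have := congrFun (congrFun h4 0) 0
    simpa using this.symm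
  rw [h2, h3, one_smul]

lemma sqrtd_sq (q : ℕ) : sqrtd q * sqrtd q = (2 : ℂ) ^ q := by
  unfold sqrtd
  rw [← Complex.ofReal_mul, Real.mul_self_sqrt (by positivity)]
  simp

lemma sqrtd_ne (q : ℕ) : sqrtd q ≠ 0 := fun h => by
  have := sqrtd_sq q
  rw [h, mul_zero] at this
  exact pow_ne_zero q two_ne_zero this.symm

lemma p_herm {q : ℕ} (a : E q) : (p a)ᴴ = p a := by
  rw [p, Matrix.conjTranspose_smul, P_herm]
  congr 1
  rw [sqrtd]; simp

lemma p_mul_p {q : ℕ} (a b : E q) : p a * p b = ((sqrtd q)⁻¹ * om a b) • p (a + b) := by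
  rw [p, p, p, smul_mul_smul_comm, P_mul, smul_smul, smul_smul]
  congr 1; ring

lemma nprod_p {q : ℕ} (a b : E q) : nprod (p a) (p b) = om a b • p (a + b) := by
  rw [nprod, p_mul_p, smul_smul, ← mul_assoc, mul_inv_cancel₀ (sqrtd_ne q), one_mul]

lemma p_trace {q : ℕ} (a b : E q) : ((p a)ᴴ * p b).trace = if a = b then 1 else 0 := by
  rw [p_herm]
  have h0 : (2 : ℂ) ^ q ≠ 0 := pow_ne_zero q two_ne_zero
  split_ifs with h
  · subst h
    rw [p, smul_mul_smul_comm, P_sq, trace_smul, ← P_zero, P_trace, if_pos rfl, ← mul_inv,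
      sqrtd_sq, smul_eq_mul, inv_mul_cancel₀ h0]
  · rw [p_mul_p, p, trace_smul, trace_smul, P_trace, if_neg fun h' => h (E_eq_of_add h')]
    simp

lemma p_smul_inj {q : ℕ} {a b : E q} {c : ℂ} (h : p a = c • p b) : a = b := by
  by_contra hab
  have h1 := p_trace a a
  conv at h1 => lhs; arg 1; arg 2; rw [h]
  rw [Matrix.mul_smul, trace_smul, p_trace, if_neg hab] at h1
  simp at h1

lemma p_inj {q : ℕ} : Function.Injective (p : E q → Mat q) := fun a b h =>
  p_smul_inj (c := 1) (by rw [one_smul]; exact h)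

lemma p_comm {q : ℕ} (a b : E q) : p b * p a = chi (B a b) • (p a * p b) := by
  rw [p, p, smul_mul_smul_comm, smul_mul_smul_comm, P_comm, smul_comm]

lemma p_mul_ne {q : ℕ} (a b : E q) : p a * p b ≠ 0 := fun h => by
  rw [p_mul_p] at h
  have h2 := p_trace (a + b) (a + b)
  have h3 : p (a + b) = 0 := by
    refine (smul_eq_zero.1 h).resolve_left (mul_ne_zero (inv_ne_zero (sqrtd_ne q)) (om_ne a b))
  rw [h3] at h2
  simp at h2

lemma p_commute_iff {q : ℕ} (a b : E q) : p a * p b = p b * p a ↔ B a b = 0 := by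
  rw [p_comm a b]
  constructor
  · intro h
    rcases zcases (B a b) with h0 | h1
    · exact h0
    · rw [h1, chi_one, neg_one_smul] at h
      have h2 : (2 : ℂ) • (p a * p b) = 0 := by
        rw [two_smul]; nth_rewrite 1 [h]; simp
      exact absurd ((smul_eq_zero.1 h2).resolve_left two_ne_zero) (p_mul_ne a b)
  · intro h; simp [h]

lemma mem_sigmaHat {q : ℕ} (M : Mat q) : M ∈ sigmaHat q ↔ ∃ a : E q, M = p a := by
  constructor
  · rintro ⟨a, rfl⟩
    choose f hf using lab_bij.2
    refine ⟨fun i => f (a i), ?_⟩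
    simp [p, P, hf]
  · rintro ⟨a, rfl⟩
    exact ⟨_, rfl⟩

lemma p_zero {q : ℕ} : p (0 : E q) = sigma0 q := by rw [p, P_zero, sigma0]

lemma mem_sigmaSet {q : ℕ} (M : Mat q) : M ∈ sigmaSet q ↔ ∃ a : E q, a ≠ 0 ∧ M = p a := by
  rw [sigmaSet, Set.mem_sdiff, mem_sigmaHat, Set.mem_singleton_iff, ← p_zero]
  constructor
  · rintro ⟨⟨a, rfl⟩, h⟩
    exact ⟨a, fun h' => h (by rw [h']), rfl⟩
  · rintro ⟨a, h, rfl⟩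
    exact ⟨⟨a, rfl⟩, fun h' => h (p_inj h')⟩

def C {q : ℕ} (τ : E q) : Finset (E q) :=
  Finset.univ.filter fun σ => τ ≠ 0 ∧ σ ≠ 0 ∧ σ ≠ τ ∧ B σ τ = 0

lemma mem_C {q : ℕ} {τ σ : E q} : σ ∈ C τ ↔ τ ≠ 0 ∧ σ ≠ 0 ∧ σ ≠ τ ∧ B σ τ = 0 := by
  simp [C]

lemma CSet_p {q : ℕ} {τ : E q} (hτ : τ ≠ 0) : CSet (p τ) = p '' (C τ : Set (E q)) := by
  ext M
  simp only [CSet, Set.mem_ofPred_eq, mem_sigmaSet, Set.mem_image, Finset.mem_coe, mem_C]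
  constructor
  · rintro ⟨⟨a, ha, rfl⟩, h1, h2⟩
    exact ⟨a, ⟨hτ, ha, fun h => h1 (by rw [h]), (p_commute_iff _ _).1 h2⟩, rfl⟩
  · rintro ⟨a, ⟨_, ha, h1, h2⟩, rfl⟩
    exact ⟨⟨a, ha, rfl⟩, fun h => h1 (p_inj h), (p_commute_iff _ _).2 h2⟩

lemma C_add {q : ℕ} {τ σ : E q} (h : σ ∈ C τ) : σ + τ ∈ C τ := by
  rw [mem_C] at h ⊢
  refine ⟨h.1, fun h' => h.2.2.1 (E_eq_of_add h'), fun h' => h.2.1 ?_, ?_⟩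
  · simpa using h'
  · rw [B_add_left, h.2.2.2, B_self, add_zero]

lemma sum_C {q : ℕ} {τ : E q} (hτ : τ ≠ 0) {x : E q} (hx : B x τ = 0) :
    ∑ ν ∈ C τ, chi (B ν x) =
      (4 : ℂ) ^ q / 2 * ((if x = 0 then 1 else 0) + (if x = τ then 1 else 0)) - 2 := by
  have h1 : ∀ ν : E q, (if B ν τ = 0 then chi (B ν x) else 0) =
      (chi (B ν x) + chi (B ν (x + τ))) / 2 := by
    intro ν
    rw [B_add_right, chi_add]
    rcases zcases (B ν τ) with h | h <;> simp [h]
  have h2 : ∑ ν : E q, (if B ν τ = 0 then chi (B ν x) else 0) =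
      (4 : ℂ) ^ q / 2 * ((if x = 0 then 1 else 0) + (if x = τ then 1 else 0)) := by
    simp only [h1, ← Finset.sum_div, Finset.sum_add_distrib, sum_chi]
    have : x + τ = 0 ↔ x = τ := ⟨E_eq_of_add, fun h => by rw [h, E_add_self]⟩
    simp only [this]
    split_ifs <;> ring
  have h3 : (Finset.univ.filter fun ν : E q => B ν τ = 0) = insert 0 (insert τ (C τ)) := by
    ext ν
    simp only [Finset.mem_filter, Finset.mem_univ, true_and, Finset.mem_insert, mem_C]
    constructor
    · intro h
      by_cases h0 : ν = 0
      · exact Or.inl h0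
      by_cases h1 : ν = τ
      · exact Or.inr (Or.inl h1)
      exact Or.inr (Or.inr ⟨hτ, h0, h1, h⟩)
    · rintro (rfl | rfl | h)
      · simp
      · simp
      · exact h.2.2.2
  rw [← Finset.sum_filter, h3, Finset.sum_insert, Finset.sum_insert, B_zero_left, chi_zero,
    B_comm τ x, hx, chi_zero] at h2
  · rw [← h2]; ring
  · simp [mem_C]
  · simp [mem_C, Ne.symm hτ]

lemma card_C {q : ℕ} {τ : E q} (hτ : τ ≠ 0) : ((C τ).card : ℂ) = (4 : ℂ) ^ q / 2 - 2 := by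
  have := sum_C hτ (x := 0) (by simp)
  simp [Ne.symm hτ] at this
  exact this


section HS
variable {q : ℕ}

lemma hs_add_right (x y z : BMat q) : hs x (y + z) = hs x y + hs x z := by
  simp [hs, Matrix.mul_add]
lemma hs_add_left (x y z : BMat q) : hs (x + y) z = hs x z + hs y z := by
  simp [hs, Matrix.add_mul]
lemma hs_sub_right (x y z : BMat q) : hs x (y - z) = hs x y - hs x z := by
  simp [hs, Matrix.mul_sub]
lemma hs_smul_right (c : ℂ) (x y : BMat q) : hs x (c • y) = c * hs x y := by
  simp [hs]
lemma hs_smul_left (c : ℂ) (x y : BMat q) : hs (c • x) y = (starRingEnd ℂ) c * hs x y := by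
  simp [hs]
@[simp] lemma hs_zero_right (x : BMat q) : hs x 0 = 0 := by simp [hs]
@[simp] lemma hs_zero_left (x : BMat q) : hs 0 x = 0 := by simp [hs]
lemma hs_sum_right {ι : Type*} (s : Finset ι) (x : BMat q) (f : ι → BMat q) :
    hs x (∑ i ∈ s, f i) = ∑ i ∈ s, hs x (f i) := by
  simp [hs, Matrix.mul_sum, Matrix.trace_sum]
lemma hs_sum_left {ι : Type*} (s : Finset ι) (x : BMat q) (f : ι → BMat q) :
    hs (∑ i ∈ s, f i) x = ∑ i ∈ s, hs (f i) x := by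
  simp [hs, Matrix.sum_mul, Matrix.trace_sum, Matrix.conjTranspose_sum]

open scoped ComplexOrder in
lemma hs_self {x : BMat q} (h : hs x x = 0) : x = 0 :=
  Matrix.trace_conjTranspose_mul_self_eq_zero_iff.1 h

lemma hs_conj (x y : BMat q) : (starRingEnd ℂ) (hs x y) = hs y x := by
  rw [hs, hs, starRingEnd_apply, ← Matrix.trace_conjTranspose, Matrix.conjTranspose_mul,
    Matrix.conjTranspose_conjTranspose]

lemma hs_kron (A B' C' D : Mat q) :
    hs (A ⊗ₖ B') (C' ⊗ₖ D) = (Aᴴ * C').trace * (B'ᴴ * D).trace := by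
  rw [hs, Matrix.conjTranspose_kronecker, ← Matrix.mul_kronecker_mul, Matrix.trace_kronecker]

/-- `hs x ·` as a linear functional -/
def hsL (x : BMat q) : BMat q →ₗ[ℂ] ℂ where
  toFun y := hs x y
  map_add' := hs_add_right x
  map_smul' c y := by simp [hs_smul_right]

@[simp] lemma hsL_apply (x y : BMat q) : hsL x y = hs x y := rfl

/-- orthogonal projections exist -/
lemma exists_proj (W : Submodule ℂ (BMat q)) : ∃ K : BMat q →ₗ[ℂ] BMat q,
    (∀ x, K x ∈ W) ∧ (∀ x ∈ W, K x = x) ∧ ∀ x, ∀ w ∈ W, hs w (x - K x) = 0 := by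
  let I := (Idx q × Idx q) × (Idx q × Idx q)
  let L : BMat q ≃ₗ[ℂ] EuclideanSpace ℂ I :=
    { toFun := fun M => WithLp.toLp 2 fun i => M i.1 i.2
      invFun := fun v => Matrix.of fun i j => v (i, j)
      map_add' := fun _ _ => rfl
      map_smul' := fun _ _ => rfl
      left_inv := fun _ => rfl
      right_inv := fun _ => rfl }
  have hL : ∀ x y : BMat q, hs x y = inner ℂ (L x) (L y) := by
    intro x y
    rw [PiLp.inner_apply, Fintype.sum_prod_type, Finset.sum_comm]
    simp only [hs, Matrix.trace, Matrix.diag, Matrix.mul_apply, Matrix.conjTranspose_apply]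
    refine Finset.sum_congr rfl fun i _ => Finset.sum_congr rfl fun j _ => ?_
    rw [RCLike.inner_apply, mul_comm]
    rfl
  let W' : Submodule ℂ (EuclideanSpace ℂ I) := W.map L.toLinearMap
  refine ⟨L.symm.toLinearMap ∘ₗ W'.starProjection.toLinearMap ∘ₗ L.toLinearMap, ?_, ?_, ?_⟩
  · intro x
    obtain ⟨w, hw, hw'⟩ := Submodule.mem_map.1 (Submodule.starProjection_apply_mem W' (L x))
    have : L.symm (W'.starProjection (L x)) = w := by
      rw [← hw']; exact L.symm_apply_apply w
    change L.symm (W'.starProjection (L x)) ∈ W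
    rw [this]; exact hw
  · intro x hx
    have : W'.starProjection (L x) = L x :=
      Submodule.starProjection_eq_self_iff.2 (Submodule.mem_map_of_mem hx)
    change L.symm (W'.starProjection (L x)) = x
    rw [this, L.symm_apply_apply]
  · intro x w hw
    have h1 : L (x - L.symm (W'.starProjection (L x))) = L x - W'.starProjection (L x) := by
      rw [map_sub, L.apply_symm_apply]
    change hs w (x - L.symm (W'.starProjection (L x))) = 0
    rw [hL, h1]
    exact Submodule.inner_right_of_mem_orthogonal (K := W') (Submodule.mem_map_of_mem hw)
      (Submodule.sub_starProjection_mem_orthogonal _)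

lemma SVec_smul_right (A B' : Mat q) (c : ℂ) : SVec A (c • B') = c • SVec A B' := by
  simp [SVec, Matrix.kronecker_smul, Matrix.smul_kronecker, smul_comm c, ← smul_add]

lemma SVec_smul_left (A B' : Mat q) (c : ℂ) : SVec (c • A) B' = c • SVec A B' := by
  simp [SVec, Matrix.kronecker_smul, Matrix.smul_kronecker, smul_comm c, ← smul_add]

lemma SVec_comm (A B' : Mat q) : SVec A B' = SVec B' A := by
  simp [SVec, add_comm]

lemma hs_SVec (a b c d : E q) : hs (SVec (p a) (p b)) (SVec (p c) (p d)) =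
    (if a = c then 1 else 0) * (if b = d then 1 else 0) +
    (if a = d then 1 else 0) * (if b = c then 1 else 0) := by
  have h2 : ((Real.sqrt 2 : ℂ))⁻¹ * ((Real.sqrt 2 : ℂ))⁻¹ = 1 / 2 := by
    rw [← mul_inv, ← Complex.ofReal_mul, Real.mul_self_sqrt (by norm_num)]; norm_num
  simp only [SVec, hs_smul_left, hs_smul_right, hs_add_left, hs_add_right, hs_kron, p_trace,
    map_inv₀, Complex.conj_ofReal]
  linear_combination (2 * ((if a = c then 1 else 0) * (if b = d then 1 else 0) +
    (if a = d then 1 else 0) * (if b = c then 1 else 0))) * h2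

def e (τ σ : E q) : BMat q := SVec (p σ) (nprod (p σ) (p τ))

lemma e_eq (τ σ : E q) : e τ σ = om σ τ • SVec (p σ) (p (σ + τ)) := by
  rw [e, nprod_p, SVec_smul_right]

lemma om_swap (σ τ : E q) : om σ τ * om (σ + τ) τ = 1 := by
  have h1 : (P σ * P τ) * P τ = P σ := by rw [mul_assoc, P_sq, mul_one]
  rw [P_mul, Matrix.smul_mul, P_mul, E_add_add, smul_smul] at h1
  have h2 := congrArg (fun M => (M * P σ).trace) h1
  simp only [Matrix.smul_mul, P_sq, trace_smul] at h2
  rw [← P_zero, P_trace, if_pos rfl, smul_eq_mul] at h2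
  exact mul_right_cancel₀ (pow_ne_zero q two_ne_zero) (h2.trans (one_mul _).symm)

lemma e_swap {τ σ : E q} (h : B σ τ = 0) : e τ (σ + τ) = e τ σ := by
  have h1 := om_swap σ τ
  have h2 := om_sq σ τ
  rw [h, chi_zero] at h2
  have h3 : om (σ + τ) τ = om σ τ := mul_left_cancel₀ (om_ne σ τ) (h1.trans h2.symm)
  rw [e_eq, e_eq, E_add_add, SVec_comm, h3]

lemma gram {τ σ τ' σ' : E q} (h : σ ∈ C τ) (h' : σ' ∈ C τ') :
    hs (e τ σ) (e τ' σ') = if τ = τ' ∧ (σ' = σ ∨ σ' = σ + τ) then 1 else 0 := by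
  have hself : ∀ σ : E q, σ ∈ C τ → hs (e τ σ) (e τ σ) = 1 := by
    intro σ h
    rw [e_eq, hs_smul_left, hs_smul_right, ← mul_assoc, om_star, hs_SVec]
    have : σ ≠ σ + τ := fun h' => (mem_C.1 h).1 (by simpa using h')
    simp [this]
  split_ifs with hc
  · obtain ⟨rfl, rfl | rfl⟩ := hc
    · exact hself _ h
    · rw [e_swap (mem_C.1 h).2.2.2]; exact hself _ h
  · rw [e_eq, e_eq, hs_smul_left, hs_smul_right, hs_SVec]
    have h1 : ¬ (σ = σ' ∧ σ + τ = σ' + τ') := by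
      rintro ⟨rfl, h2⟩
      exact hc ⟨by simpa using h2, Or.inl rfl⟩
    have h2 : ¬ (σ = σ' + τ' ∧ σ + τ = σ') := by
      rintro ⟨h3, rfl⟩
      refine hc ⟨?_, Or.inr rfl⟩
      rw [add_assoc] at h3
      exact E_eq_of_add (by simpa using h3)
    have h1' : ((if σ = σ' then 1 else 0) * (if σ + τ = σ' + τ' then 1 else 0) : ℂ) = 0 := by
      by_cases a : σ = σ'
      · rw [if_neg fun b => h1 ⟨a, b⟩, mul_zero]
      · rw [if_neg a, zero_mul]
    have h2' : ((if σ = σ' + τ' then 1 else 0) * (if σ + τ = σ' then 1 else 0) : ℂ) = 0 := by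
      by_cases a : σ = σ' + τ'
      · rw [if_neg fun b => h2 ⟨a, b⟩, mul_zero]
      · rw [if_neg a, zero_mul]
    rw [h1', h2']; simp

structure Act (U : Mat q) (g : E q → E q) (s : E q → ℂ) : Prop where
  uni : Uᴴ * U = 1
  act : ∀ x, U * p x * Uᴴ = s x • p (g x)
  sgn : ∀ x, s x = 1 ∨ s x = -1

lemma Act.sq {U : Mat q} {g s} (h : Act U g s) (x : E q) : s x * s x = 1 := by
  rcases h.sgn x with h | h <;> simp [h]

lemma Act.conj {U : Mat q} {g s} (h : Act U g s) (x : E q) : (starRingEnd ℂ) (s x) = s x := by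
  rcases h.sgn x with h | h <;> simp [h]

lemma conj_mul {U : Mat q} (hU : Uᴴ * U = 1) (A B' : Mat q) :
    U * (A * B') * Uᴴ = (U * A * Uᴴ) * (U * B' * Uᴴ) := by
  have : (U * A * Uᴴ) * (U * B' * Uᴴ) = U * A * (Uᴴ * U) * B' * Uᴴ := by
    simp only [mul_assoc]
  rw [this, hU]; simp only [mul_assoc, mul_one]

lemma twoCopy_kron (U A B' : Mat q) :
    twoCopy U (A ⊗ₖ B') = (U * A * Uᴴ) ⊗ₖ (U * B' * Uᴴ) := by
  change (U ⊗ₖ U) * (A ⊗ₖ B') * (U ⊗ₖ U)ᴴ = _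
  rw [Matrix.conjTranspose_kronecker, ← Matrix.mul_kronecker_mul, ← Matrix.mul_kronecker_mul]

lemma twoCopy_SVec (U A B' : Mat q) :
    twoCopy U (SVec A B') = SVec (U * A * Uᴴ) (U * B' * Uᴴ) := by
  rw [SVec, map_smul, map_add, twoCopy_kron, twoCopy_kron, SVec]

lemma Act.e {U : Mat q} {g s} (h : Act U g s) (τ σ : E q) :
    twoCopy U (e τ σ) = s τ • CliffordPaper.e (g τ) (g σ) := by
  have h1 : U * nprod (p σ) (p τ) * Uᴴ = (s σ * s τ) • nprod (p (g σ)) (p (g τ)) := by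
    rw [nprod, nprod, Matrix.mul_smul, Matrix.smul_mul, conj_mul h.uni, h.act, h.act,
      smul_mul_smul_comm, smul_comm]
  rw [CliffordPaper.e, twoCopy_SVec, h.act, h1, SVec_smul_left, SVec_smul_right, smul_smul,
    ← mul_assoc, h.sq, one_mul]
  rfl

lemma hs_twoCopy {U : Mat q} (hU : Uᴴ * U = 1) (x y : BMat q) :
    hs (twoCopy U x) (twoCopy U y) = hs x y := by
  have hV : (U ⊗ₖ U)ᴴ * (U ⊗ₖ U) = 1 := by
    rw [Matrix.conjTranspose_kronecker, ← Matrix.mul_kronecker_mul, hU, Matrix.one_kronecker_one]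
  change hs ((U ⊗ₖ U) * x * (U ⊗ₖ U)ᴴ) ((U ⊗ₖ U) * y * (U ⊗ₖ U)ᴴ) = _
  generalize U ⊗ₖ U = V at hV
  rw [hs, hs, Matrix.conjTranspose_mul, Matrix.conjTranspose_mul,
    Matrix.conjTranspose_conjTranspose]
  have : V * (xᴴ * Vᴴ) * (V * y * Vᴴ) = V * (xᴴ * (Vᴴ * V) * y * Vᴴ) := by
    simp only [mul_assoc]
  rw [this, hV, Matrix.trace_mul_comm, mul_one]
  simp only [mul_assoc, hV, mul_one]

lemma Act.inj {U : Mat q} {g s} (h : Act U g s) : Function.Injective g := by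
  intro x y hxy
  have h1 := h.act x
  rw [hxy] at h1
  have h2 := h.act y
  have h3 : U * p x * Uᴴ = U * ((s x * s y) • p y) * Uᴴ := by
    rw [h1, Matrix.mul_smul, Matrix.smul_mul, h2, smul_smul, mul_assoc, h.sq, mul_one]
  have h4 : ∀ A : Mat q, Uᴴ * (U * A * Uᴴ) * U = A := by
    intro A
    have : Uᴴ * (U * A * Uᴴ) * U = (Uᴴ * U) * A * (Uᴴ * U) := by simp only [mul_assoc]
    rw [this, h.uni, one_mul, mul_one]
  have h5 := congrArg (fun M => Uᴴ * M * U) h3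
  simp only [h4] at h5
  exact p_smul_inj h5

lemma Act.B {U : Mat q} {g s} (h : Act U g s) (x y : E q) : B (g x) (g y) = B x y := by
  have h1 := congrArg (fun M => U * M * Uᴴ) (p_comm x y)
  simp only [Matrix.mul_smul, Matrix.smul_mul, conj_mul h.uni, h.act, smul_mul_smul_comm] at h1
  rw [p_comm (g x) (g y), smul_smul, smul_smul, mul_comm (s y)] at h1
  have h0 : s x * s y ≠ 0 := by
    intro h'
    have h2 : (s x * s x) * (s y * s y) = (s x * s y) * (s x * s y) := by ring
    rw [h.sq, h.sq, h'] at h2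
    simp at h2
  have h3 := smul_left_injective ℂ (p_mul_ne (g x) (g y)) h1
  refine chi_inj (mul_left_cancel₀ h0 ?_)
  rw [h3, mul_comm]

lemma Act.zero {U : Mat q} {g s} (h : Act U g s) : g 0 = 0 := by
  by_contra hne
  obtain ⟨z, hz⟩ := exists_B_one hne
  obtain ⟨w, rfl⟩ := (Finite.injective_iff_surjective.1 h.inj) z
  rw [h.B] at hz
  simp at hz

lemma Act.mem_C {U : Mat q} {g s} (h : Act U g s) {τ σ : E q} : g σ ∈ C (g τ) ↔ σ ∈ C τ := by
  have h0 : ∀ x, g x = 0 ↔ x = 0 := fun x => by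
    rw [← h.inj.eq_iff (a := x), h.zero]
  simp only [CliffordPaper.mem_C, h.B, ne_eq, h0, h.inj.eq_iff]

lemma Cliff_act {U : Mat q} (hU : U ∈ Cliff q) : ∃ g s, Act U g s := by
  obtain ⟨h1, h2⟩ := hU
  have h3 : ∀ x : E q, ∃ y : E q, ∃ c : ℂ, U * p x * Uᴴ = c • p y ∧ (c = 1 ∨ c = -1) := by
    intro x
    obtain ⟨τ, hτ, h⟩ := h2 (p x) ((mem_sigmaHat _).2 ⟨x, rfl⟩)
    obtain ⟨y, rfl⟩ := (mem_sigmaHat _).1 hτ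
    rcases h with h | h
    · exact ⟨y, 1, by rw [h, one_smul], Or.inl rfl⟩
    · exact ⟨y, -1, by rw [h, neg_one_smul], Or.inr rfl⟩
  choose g s h4 using h3
  exact ⟨g, s, Matrix.mem_unitaryGroup_iff'.1 h1, fun x => (h4 x).1, fun x => (h4 x).2⟩

lemma Act.cliff {U : Mat q} {g s} (h : Act U g s) : U ∈ Cliff q := by
  refine ⟨Matrix.mem_unitaryGroup_iff'.2 h.uni, fun σ hσ => ?_⟩
  obtain ⟨x, rfl⟩ := (mem_sigmaHat _).1 hσ
  refine ⟨p (g x), (mem_sigmaHat _).2 ⟨_, rfl⟩, ?_⟩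
  rw [h.act]
  rcases h.sgn x with h | h <;> simp [h]

lemma pauli_act (a : E q) : Act (P a) id (fun x => chi (B a x)) := by
  refine ⟨by rw [P_herm, P_sq], fun x => ?_, fun x => ?_⟩
  · rw [P_herm, p, Matrix.mul_smul, Matrix.smul_mul, P_comm x a, Matrix.smul_mul, mul_assoc, P_sq,
      mul_one, smul_comm, B_comm]
    rfl
  · rcases zcases (B a x) with h | h <;> simp [h]

lemma trans_act (a : E q) : ∃ U s, Act (U : Mat q) (Tv a) s := by
  have h2 : ((Real.sqrt 2 : ℂ))⁻¹ * ((Real.sqrt 2 : ℂ))⁻¹ = 1 / 2 := by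
    rw [← mul_inv, ← Complex.ofReal_mul, Real.mul_self_sqrt (by norm_num)]; norm_num
  let r : ℂ := ((Real.sqrt 2 : ℂ))⁻¹
  let U : Mat q := r • (1 + Complex.I • P a)
  have hUH : Uᴴ = r • (1 - Complex.I • P a) := by
    simp only [U, r, Matrix.conjTranspose_smul, Matrix.conjTranspose_add, P_herm,
      Matrix.conjTranspose_one]
    simp [sub_eq_add_neg]
  have hUU : Uᴴ * U = 1 := by
    rw [hUH]
    simp only [U]
    rw [smul_mul_smul_comm, h2, sub_mul, one_mul, mul_add, mul_one, smul_mul_smul_comm, P_sq,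
      Complex.I_mul_I]
    simp only [neg_smul, one_smul]
    have : (1 + Complex.I • P a - (Complex.I • P a + -1) : Mat q) = (2 : ℂ) • 1 := by
      rw [two_smul]; abel
    rw [this, smul_smul]; norm_num
  have key : ∀ x, ∃ c : ℂ, U * p x * Uᴴ = c • p (Tv a x) ∧ (c = 1 ∨ c = -1) := by
    intro x
    have hexp : U * p x * Uᴴ = (sqrtd q)⁻¹ • (1 / 2 : ℂ) •
        (P x + P a * P x * P a + Complex.I • (P a * P x - P x * P a)) := by
      rw [p, Matrix.mul_smul U, Matrix.smul_mul, hUH]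
      congr 1
      simp only [U]
      rw [Matrix.smul_mul, Matrix.smul_mul, Matrix.mul_smul, smul_smul, h2]
      congr 1
      simp only [add_mul, mul_sub, one_mul, mul_one, Matrix.smul_mul, Matrix.mul_smul, smul_smul,
        Complex.I_mul_I, smul_sub, smul_add, neg_smul, one_smul]
      abel
    rcases zcases (B a x) with h | h
    · refine ⟨1, ?_, Or.inl rfl⟩
      have hc := P_comm x a
      rw [B_comm, h, chi_zero, one_smul] at hc
      rw [hexp, Tv_fix h, hc, mul_assoc, P_sq, mul_one, sub_self, smul_zero, add_zero,
        ← two_smul ℂ, one_smul, p]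
      module
    · have hc := P_comm x a
      rw [B_comm, h, chi_one, neg_one_smul] at hc
      have hT : Tv a x = x + a := by simp [Tv, h]
      refine ⟨-Complex.I * om x a, ?_, ?_⟩
      · rw [hexp, hT, hc, neg_mul, mul_assoc, P_sq, mul_one, add_neg_cancel, zero_add,
          ← neg_add', ← two_smul ℂ, P_mul, p]
        module
      · have ho := om_sq x a
        rw [B_comm, h, chi_one] at ho
        apply mul_self_eq_one_iff.1
        linear_combination (Complex.I * Complex.I) * ho - Complex.I_mul_I
  choose s hs' using key
  exact ⟨U, s, hUU, fun x => (hs' x).1, fun x => (hs' x).2⟩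

end HS

section Comm
variable {q : ℕ}

lemma VScom_eq : VScom q = Submodule.span ℂ {M | ∃ τ : E q, ∃ σ ∈ C τ, M = e τ σ} := by
  apply le_antisymm
  · rw [VScom, Submodule.span_le]
    rintro M ⟨t, ht, s, hs', rfl⟩
    obtain ⟨τ, hτ, rfl⟩ := (mem_sigmaSet _).1 ht
    rw [CSet_p hτ] at hs'
    obtain ⟨σ, hσ, rfl⟩ := hs'
    have hσ' := mem_C.1 hσ
    have h1 : e (σ + τ) σ = om σ (σ + τ) • SVec (p σ) (p τ) := by
      rw [e_eq, ← add_assoc, E_add_self, zero_add]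
    have h2 : SVec (p σ) (p τ) = (om σ (σ + τ))⁻¹ • e (σ + τ) σ := by
      rw [h1, smul_smul, inv_mul_cancel₀ (om_ne _ _), one_smul]
    rw [SetLike.mem_coe, h2]
    refine Submodule.smul_mem _ _ (Submodule.subset_span ⟨_, _, ?_, rfl⟩)
    rw [mem_C]
    refine ⟨fun h => hσ'.2.2.1 (E_eq_of_add h), hσ'.2.1, fun h => hτ (by simpa using h), ?_⟩
    rw [B_add_right, B_self, hσ'.2.2.2, add_zero]
  · rw [Submodule.span_le]
    rintro M ⟨τ, σ, hσ, rfl⟩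
    have hσ' := mem_C.1 hσ
    rw [SetLike.mem_coe, e_eq]
    refine Submodule.smul_mem _ _ (Submodule.subset_span ?_)
    have h0 : σ + τ ≠ 0 := fun h => hσ'.2.2.1 (E_eq_of_add h)
    refine ⟨p (σ + τ), (mem_sigmaSet _).2 ⟨_, h0, rfl⟩, p σ, ?_, rfl⟩
    rw [CSet_p h0]
    refine ⟨σ, ?_, rfl⟩
    rw [Finset.mem_coe, mem_C]
    refine ⟨h0, hσ'.2.1, fun h => hσ'.1 (by simpa using h), ?_⟩
    rw [B_add_right, B_self, hσ'.2.2.2, add_zero]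

lemma e_mem {τ σ : E q} (h : σ ∈ C τ) : e τ σ ∈ VScom q := by
  rw [VScom_eq]; exact Submodule.subset_span ⟨_, _, h, rfl⟩

lemma sum_pair {M : Type*} [AddCommMonoid M] {τ σ : E q} (h : σ ∈ C τ) (F : E q → M) :
    (∑ σ' ∈ C τ, if σ' = σ ∨ σ' = σ + τ then F σ' else 0) = F σ + F (σ + τ) := by
  have hne : σ ≠ σ + τ := fun h' => (mem_C.1 h).1 (by simpa using h')
  rw [← Finset.sum_filter, ← Finset.sum_pair hne]
  congr 1
  ext x
  simp only [Finset.mem_filter, Finset.mem_insert, Finset.mem_singleton]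
  constructor
  · exact fun h => h.2
  · rintro (rfl | rfl)
    · exact ⟨h, Or.inl rfl⟩
    · exact ⟨C_add h, Or.inr rfl⟩

lemma pair_symm {τ σ σ' : E q} : (σ = σ' ∨ σ = σ' + τ) ↔ (σ' = σ ∨ σ' = σ + τ) := by
  constructor <;> (rintro (rfl | rfl) <;> simp [E_add_add])

lemma sum_gram {M : Type*} [AddCommGroup M] [Module ℂ M] {τ σ : E q} (h : σ ∈ C τ)
    (F : E q → E q → M) :
    ∑ τ', ∑ σ' ∈ C τ', hs (e τ' σ') (e τ σ) • F τ' σ' = F τ σ + F τ (σ + τ) := by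
  rw [Finset.sum_eq_single τ]
  · rw [← sum_pair h (F τ)]
    refine Finset.sum_congr rfl fun σ' h' => ?_
    rw [gram h' h]
    simp only [true_and, pair_symm (σ := σ)]
    split_ifs <;> simp
  · intro τ' _ hne
    refine Finset.sum_eq_zero fun σ' h' => ?_
    rw [gram h' h, if_neg fun h'' => hne h''.1, zero_smul]
  · simp

/-- reconstruction -/
lemma recon {x : BMat q} (hx : x ∈ VScom q) :
    ∑ τ, ∑ σ ∈ C τ, hs (e τ σ) x • e τ σ = (2 : ℂ) • x := by
  rw [VScom_eq] at hx
  induction hx using Submodule.span_induction with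
  | mem x hx =>
    obtain ⟨τ, σ, hσ, rfl⟩ := hx
    rw [sum_gram hσ (fun τ σ => e τ σ), e_swap (mem_C.1 hσ).2.2.2, two_smul]
  | zero => simp
  | add x y _ _ hx hy =>
    simp only [hs_add_right, add_smul, Finset.sum_add_distrib, hx, hy, smul_add]
  | smul c x _ hx =>
    simp only [hs_smul_right, mul_smul, ← Finset.smul_sum, hx]
    rw [smul_comm]

lemma recon' {x : BMat q} (hx : x ∈ VScom q) :
    x = (1 / 2 : ℂ) • ∑ τ, ∑ σ ∈ C τ, hs (e τ σ) x • e τ σ := by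
  rw [recon hx, smul_smul]; norm_num

lemma ext_zero {x : BMat q} (hx : x ∈ VScom q) (h : ∀ τ, ∀ σ ∈ C τ, hs (e τ σ) x = 0) :
    x = 0 := by
  rw [recon' hx, Finset.sum_eq_zero, smul_zero]
  exact fun τ _ => Finset.sum_eq_zero fun σ hσ => by rw [h τ σ hσ, zero_smul]

lemma ext_coord {x y : BMat q} (hx : x ∈ VScom q) (hy : y ∈ VScom q)
    (h : ∀ τ, ∀ σ ∈ C τ, hs (e τ σ) x = hs (e τ σ) y) : x = y := by
  rw [← sub_eq_zero]
  refine ext_zero (Submodule.sub_mem _ hx hy) fun τ σ hσ => ?_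
  rw [hs_sub_right, h τ σ hσ, sub_self]

lemma coord_swap (x : BMat q) {τ σ : E q} (h : σ ∈ C τ) :
    hs (e τ (σ + τ)) x = hs (e τ σ) x := by rw [e_swap (mem_C.1 h).2.2.2]

/-- synthesis from coordinates -/
def Rec (f : E q → E q → ℂ) : BMat q := (1 / 2 : ℂ) • ∑ τ, ∑ σ ∈ C τ, f τ σ • e τ σ

lemma Rec_mem (f : E q → E q → ℂ) : Rec f ∈ VScom q :=
  Submodule.smul_mem _ _ (Submodule.sum_mem _ fun _ _ => Submodule.sum_mem _ fun _ h =>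
    Submodule.smul_mem _ _ (e_mem h))

lemma hs_Rec (f : E q → E q → ℂ) {τ σ : E q} (h : σ ∈ C τ) :
    hs (e τ σ) (Rec f) = (f τ σ + f τ (σ + τ)) / 2 := by
  have : ∀ τ', ∀ σ' ∈ C τ', hs (e τ σ) (e τ' σ') = hs (e τ' σ') (e τ σ) := by
    intro τ' σ' h'
    rw [← hs_conj, gram h' h]
    split_ifs <;> simp
  rw [Rec, hs_smul_right, hs_sum_right, ← sum_gram h f]
  simp only [hs_sum_right, hs_smul_right, smul_eq_mul]
  rw [one_div, div_eq_inv_mul]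
  congr 1
  exact Finset.sum_congr rfl fun τ' _ => Finset.sum_congr rfl fun σ' h' => by
    rw [this τ' σ' h', mul_comm]

/-- symmetries of a kernel -/
structure Symm (k : E q → E q → E q → ℂ) (g : E q → E q) : Prop where
  inj : Function.Injective g
  add : ∀ x y, g (x + y) = g x + g y
  B : ∀ x y, B (g x) (g y) = B x y
  inv : ∀ τ σ σ', k (g τ) (g σ) (g σ') = k τ σ σ'

lemma Symm.mem {k : E q → E q → E q → ℂ} {g} (h : Symm k g) {τ σ : E q} (hσ : σ ∈ C τ) :
    g σ ∈ C (g τ) := by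
  have h0 : g 0 = 0 := by
    have := h.add 0 0
    simpa using this
  have h1 : ∀ x, g x = 0 ↔ x = 0 := fun x => by rw [← h.inj.eq_iff (a := x), h0]
  rw [mem_C] at hσ ⊢
  simpa only [h.B, ne_eq, h1, h.inj.eq_iff] using hσ

lemma step' {k : E q → E q → E q → ℂ}
    (hk : ∀ a τ σ σ', k (Tv a τ) (Tv a σ) (Tv a σ') = k τ σ σ')
    (W : Submodule (ZMod 2) (E q)) {v w : E q} (hv : v ∉ W) (hw : w ∉ W)
    (h : ∀ y ∈ W, B v y = B w y) :
    ∃ g, Symm k g ∧ (∀ y ∈ W, g y = y) ∧ g v = w := by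
  obtain ⟨a, b, ha, hb, hab⟩ := step W hv hw h
  refine ⟨fun x => Tv b (Tv a x), ⟨(Tv_inj b).comp (Tv_inj a), fun x y => ?_, fun x y => ?_,
    fun τ σ σ' => ?_⟩, fun y hy => ?_, hab⟩
  · rw [Tv_add, Tv_add]
  · rw [B_Tv, B_Tv]
  · rw [hk, hk]
  · change Tv b (Tv a y) = y
    rw [Tv_fix (ha y hy), Tv_fix (hb y hy)]

lemma k_type {k : E q → E q → E q → ℂ}
    (hk : ∀ a τ σ σ', k (Tv a τ) (Tv a σ) (Tv a σ') = k τ σ σ')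
    (hk2 : ∀ τ σ σ', σ ∈ C τ → σ' ∈ C τ → k τ σ (σ' + τ) = k τ σ σ')
    {τ σ σ' τ₁ σ₁ σ₁' : E q} (h : σ ∈ C τ) (h' : σ' ∈ C τ) (h₁ : σ₁ ∈ C τ₁) (h₁' : σ₁' ∈ C τ₁)
    (ht : (σ' = σ ∨ σ' = σ + τ) ↔ (σ₁' = σ₁ ∨ σ₁' = σ₁ + τ₁))
    (hB : B σ σ' = B σ₁ σ₁') : k τ σ σ' = k τ₁ σ₁ σ₁' := by
  -- move τ
  obtain ⟨g, hg, -, hgτ⟩ := step' hk ⊥ (v := τ) (w := τ₁) (by simpa using (mem_C.1 h).1)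
    (by simpa using (mem_C.1 h₁).1) (by simp)
  rw [← hg.inv]
  replace h := hg.mem h
  replace h' := hg.mem h'
  rw [← hg.B] at hB
  rw [← hg.inj.eq_iff, ← hg.inj.eq_iff (a := σ') (b := σ + τ), hg.add] at ht
  generalize g σ = s at *
  generalize g σ' = s' at *
  rw [hgτ] at *
  clear hg hgτ
  -- move σ
  have hmem : ∀ x ∈ C τ₁, x ∉ Submodule.span (ZMod 2) {τ₁} := by
    intro x hx hx'
    obtain ⟨c, rfl⟩ := Submodule.mem_span_singleton.1 hx'
    rw [mem_C] at hx
    rcases zcases c with rfl | rfl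
    · simp at hx
    · simp at hx
  obtain ⟨g, hg, hgW, hgs⟩ := step' hk (Submodule.span (ZMod 2) {τ₁}) (hmem _ h) (hmem _ h₁) (by
    intro y hy
    obtain ⟨c, rfl⟩ := Submodule.mem_span_singleton.1 hy
    rcases zcases c with rfl | rfl
    · simp
    · rw [one_smul, (mem_C.1 h).2.2.2, (mem_C.1 h₁).2.2.2])
  have hgτ := hgW τ₁ (Submodule.mem_span_singleton_self _)
  rw [← hg.inv]
  replace h := hg.mem h
  replace h' := hg.mem h'
  rw [← hg.B] at hB
  rw [← hg.inj.eq_iff, ← hg.inj.eq_iff (a := s') (b := s + τ₁), hg.add] at ht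
  generalize g s' = r at *
  rw [hgτ, hgs] at *
  clear hg hgτ hgs hgW
  by_cases hc : r = σ₁ ∨ r = σ₁ + τ₁
  · have e1 : k τ₁ σ₁ r = k τ₁ σ₁ σ₁ := by
      rcases hc with rfl | rfl
      · rfl
      · exact hk2 _ _ _ h₁ h₁
    have e2 : k τ₁ σ₁ σ₁' = k τ₁ σ₁ σ₁ := by
      rcases ht.1 hc with rfl | rfl
      · rfl
      · exact hk2 _ _ _ h₁ h₁
    rw [e1, e2]
  · have hmem2 : ∀ x ∈ C τ₁, ¬ (x = σ₁ ∨ x = σ₁ + τ₁) →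
        x ∉ Submodule.span (ZMod 2) {τ₁, σ₁} := by
      intro x hx hne hx'
      obtain ⟨c, d, rfl⟩ := Submodule.mem_span_pair.1 hx'
      rw [mem_C] at hx
      rcases zcases c with rfl | rfl <;> rcases zcases d with rfl | rfl
      · simp at hx
      · simp at hne
      · simp at hx
      · exact hne (Or.inr (by simp [add_comm]))
    obtain ⟨g, hg, hgW, hgs⟩ := step' hk (Submodule.span (ZMod 2) {τ₁, σ₁}) (hmem2 _ h' hc)
      (hmem2 _ h₁' (fun h => hc (ht.2 h))) (by
      intro y hy
      obtain ⟨c, d, rfl⟩ := Submodule.mem_span_pair.1 hy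
      have ha : B r τ₁ = B σ₁' τ₁ := by rw [(mem_C.1 h').2.2.2, (mem_C.1 h₁').2.2.2]
      have hb : B r σ₁ = B σ₁' σ₁ := by rw [B_comm, hB, B_comm]
      rcases zcases c with rfl | rfl <;> rcases zcases d with rfl | rfl <;>
        simp [B_add_right, ha, hb])
    rw [← hg.inv, hgs, hgW τ₁ (Submodule.subset_span (by simp)),
      hgW σ₁ (Submodule.subset_span (by simp))]

lemma k_form {k : E q → E q → E q → ℂ}
    (hk : ∀ a τ σ σ', k (Tv a τ) (Tv a σ) (Tv a σ') = k τ σ σ')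
    (hk2 : ∀ τ σ σ', σ ∈ C τ → σ' ∈ C τ → k τ σ (σ' + τ) = k τ σ σ') :
    ∃ α β γ : ℂ, ∀ τ σ σ', σ ∈ C τ → σ' ∈ C τ →
      k τ σ σ' = (if σ = σ' ∨ σ = σ' + τ then α else 0) + β + γ * chi (B σ σ') := by
  classical
  let Q : Prop → ZMod 2 → E q × E q × E q → Prop := fun b z t =>
    t.2.1 ∈ C t.1 ∧ t.2.2 ∈ C t.1 ∧ ((t.2.2 = t.2.1 ∨ t.2.2 = t.2.1 + t.1) ↔ b) ∧
      B t.2.1 t.2.2 = z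
  let f : Prop → ZMod 2 → ℂ := fun b z =>
    if h : ∃ t, Q b z t then k h.choose.1 h.choose.2.1 h.choose.2.2 else 0
  have hf : ∀ τ σ σ', σ ∈ C τ → σ' ∈ C τ →
      k τ σ σ' = f (σ' = σ ∨ σ' = σ + τ) (B σ σ') := by
    intro τ σ σ' h h'
    have hex : ∃ t, Q (σ' = σ ∨ σ' = σ + τ) (B σ σ') t := ⟨(τ, σ, σ'), h, h', Iff.rfl, rfl⟩
    simp only [f]
    rw [dif_pos hex]
    obtain ⟨h1, h2, h3, h4⟩ := hex.choose_spec
    exact k_type hk hk2 h h' h1 h2 h3.symm h4.symm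
  refine ⟨f True 0 - f False 0, (f False 0 + f False 1) / 2, (f False 0 - f False 1) / 2,
    fun τ σ σ' h h' => ?_⟩
  rw [hf τ σ σ' h h']
  simp only [pair_symm (σ := σ) (σ' := σ')]
  by_cases hc : σ' = σ ∨ σ' = σ + τ
  · have hB : B σ σ' = 0 := by
      rcases hc with rfl | rfl
      · simp
      · rw [B_add_right, B_self, (mem_C.1 h).2.2.2, add_zero]
    rw [if_pos hc, hB, eq_true hc, chi_zero]; ring
  · rw [if_neg hc, eq_false hc]
    rcases zcases (B σ σ') with h0 | h0 <;> rw [h0] <;> simp <;> ring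

/-- form of any operator in the commutant -/
lemma commutant (K : BMat q →ₗ[ℂ] BMat q)
    (hK : ∀ U ∈ Cliff q, ∀ x, K (twoCopy U x) = twoCopy U (K x)) :
    ∃ α β γ : ℂ, ∀ x ∈ VScom q, ∀ τ, ∀ σ ∈ C τ, hs (e τ σ) (K x) =
      α * hs (e τ σ) x + β * ∑ ν ∈ C τ, hs (e τ ν) x +
        γ * ∑ ν ∈ C τ, chi (B ν σ) * hs (e τ ν) x := by
  have hact : ∀ {U : Mat q} {g s}, Act U g s → ∀ τ σ τ' σ',
      (s τ' * s τ) * hs (e (g τ') (g σ')) (K (e (g τ) (g σ))) = hs (e τ' σ') (K (e τ σ)) := by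
    intro U g s h τ σ τ' σ'
    rw [← hs_twoCopy h.uni (e τ' σ'), ← hK U h.cliff, h.e, h.e, map_smul, hs_smul_left,
      hs_smul_right, h.conj, mul_assoc]
  have hoff : ∀ τ σ τ' σ', τ' ≠ τ → hs (e τ' σ') (K (e τ σ)) = 0 := by
    intro τ σ τ' σ' hne
    obtain ⟨a, ha⟩ := exists_B_one (v := τ' + τ) (fun h => hne (E_eq_of_add h))
    have := hact (pauli_act a) τ σ τ' σ'
    simp only [id] at this
    rw [← chi_add, ← B_add_right, ha, chi_one] at this
    linear_combination -(1 / 2) * this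
  have hkT : ∀ a τ σ σ', hs (e (Tv a τ) (Tv a σ')) (K (e (Tv a τ) (Tv a σ))) =
      hs (e τ σ') (K (e τ σ)) := by
    intro a τ σ σ'
    obtain ⟨U, s, h⟩ := trans_act a
    have := hact h τ σ τ σ'
    rw [h.sq, one_mul] at this
    exact this
  obtain ⟨α, β, γ, hk⟩ := k_form (k := fun τ σ σ' => hs (e τ σ') (K (e τ σ))) hkT
    (fun τ σ σ' _ h' => by simp only [e_swap (mem_C.1 h').2.2.2])
  refine ⟨α, β / 2, γ / 2, fun x hx τ σ hσ => ?_⟩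
  have h1 : hs (e τ σ) (K x) = 1 / 2 * ∑ ν ∈ C τ, hs (e τ ν) x * hs (e τ σ) (K (e τ ν)) := by
    conv_lhs => rw [recon' hx]
    simp only [map_smul, map_sum, hs_smul_right, hs_sum_right]
    congr 1
    rw [Finset.sum_eq_single τ]
    · intro τ' _ hne
      exact Finset.sum_eq_zero fun σ' _ => by rw [hoff _ _ _ _ (Ne.symm hne), mul_zero]
    · simp
  rw [h1]
  have h2 : ∑ ν ∈ C τ, hs (e τ ν) x * hs (e τ σ) (K (e τ ν)) =
      ∑ ν ∈ C τ, ((if ν = σ ∨ ν = σ + τ then α * hs (e τ ν) x else 0) + β * hs (e τ ν) x +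
        γ * (chi (B ν σ) * hs (e τ ν) x)) := by
    refine Finset.sum_congr rfl fun ν hν => ?_
    rw [hk τ ν σ hν hσ]
    split_ifs <;> ring
  rw [h2, Finset.sum_add_distrib, Finset.sum_add_distrib, sum_pair hσ, coord_swap x hσ,
    ← Finset.mul_sum, ← Finset.mul_sum]
  ring

end Comm

section Final
variable {q : ℕ}

/-- the (candidate) irreducible pieces, `ε = ±1` -/
def Veps (q : ℕ) (ε : ℂ) : Submodule ℂ (BMat q) where
  carrier := {x | x ∈ VScom q ∧ ∀ τ, ∑ σ ∈ C τ, hs (e τ σ) x = 0 ∧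
    ∀ σ ∈ C τ, ∑ ν ∈ C τ, chi (B ν σ) * hs (e τ ν) x = ε * 2 ^ q * hs (e τ σ) x}
  zero_mem' := ⟨Submodule.zero_mem _, fun τ => by simp⟩
  add_mem' := by
    rintro x y ⟨hx, hx'⟩ ⟨hy, hy'⟩
    refine ⟨Submodule.add_mem _ hx hy, fun τ => ⟨?_, fun σ hσ => ?_⟩⟩
    · simp only [hs_add_right, Finset.sum_add_distrib, (hx' τ).1, (hy' τ).1, add_zero]
    · simp only [hs_add_right, mul_add, Finset.sum_add_distrib, (hx' τ).2 σ hσ, (hy' τ).2 σ hσ]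
  smul_mem' := by
    rintro c x ⟨hx, hx'⟩
    refine ⟨Submodule.smul_mem _ _ hx, fun τ => ⟨?_, fun σ hσ => ?_⟩⟩
    · simp only [hs_smul_right, ← Finset.mul_sum, (hx' τ).1, mul_zero]
    · simp only [hs_smul_right, mul_left_comm _ c, ← Finset.mul_sum, (hx' τ).2 σ hσ]

lemma mem_Veps {ε : ℂ} {x : BMat q} : x ∈ Veps q ε ↔ x ∈ VScom q ∧ ∀ τ,
    ∑ σ ∈ C τ, hs (e τ σ) x = 0 ∧
    ∀ σ ∈ C τ, ∑ ν ∈ C τ, chi (B ν σ) * hs (e τ ν) x = ε * 2 ^ q * hs (e τ σ) x := Iff.rfl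

def Vad (q : ℕ) : Submodule ℂ (BMat q) where
  carrier := {x | x ∈ VScom q ∧ ∀ τ, ∀ σ ∈ C τ, ∀ σ' ∈ C τ, hs (e τ σ) x = hs (e τ σ') x}
  zero_mem' := ⟨Submodule.zero_mem _, fun τ => by simp⟩
  add_mem' := by
    rintro x y ⟨hx, hx'⟩ ⟨hy, hy'⟩
    refine ⟨Submodule.add_mem _ hx hy, fun τ σ h σ' h' => ?_⟩
    rw [hs_add_right, hs_add_right, hx' τ σ h σ' h', hy' τ σ h σ' h']
  smul_mem' := by
    rintro c x ⟨hx, hx'⟩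
    refine ⟨Submodule.smul_mem _ _ hx, fun τ σ h σ' h' => ?_⟩
    rw [hs_smul_right, hs_smul_right, hx' τ σ h σ' h']

lemma mem_Vad {x : BMat q} : x ∈ Vad q ↔ x ∈ VScom q ∧
    ∀ τ, ∀ σ ∈ C τ, ∀ σ' ∈ C τ, hs (e τ σ) x = hs (e τ σ') x := Iff.rfl

lemma sum_C_mem {τ σ : E q} (h : σ ∈ C τ) : ∑ ν ∈ C τ, chi (B ν σ) = -2 := by
  have h' := mem_C.1 h
  rw [sum_C h'.1 h'.2.2.2, if_neg h'.2.1, if_neg h'.2.2.1]; ring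

lemma sum_C_mem' {τ σ : E q} (h : σ ∈ C τ) : ∑ ν ∈ C τ, chi (B σ ν) = -2 := by
  rw [← sum_C_mem h]; exact Finset.sum_congr rfl fun ν _ => by rw [B_comm]

lemma four_pow (q : ℕ) : (4 : ℂ) ^ q = 2 ^ q * 2 ^ q := by
  rw [← mul_pow]; norm_num

lemma sum_C_mem2 {τ σ ρ : E q} (h : σ ∈ C τ) (h' : ρ ∈ C τ) :
    ∑ ν ∈ C τ, chi (B ν σ) * chi (B ρ ν) =
      2 ^ q * 2 ^ q / 2 * (if ρ = σ ∨ ρ = σ + τ then 1 else 0) - 2 := by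
  have hσ := mem_C.1 h
  have hρ := mem_C.1 h'
  have h1 : ∀ ν, chi (B ν σ) * chi (B ρ ν) = chi (B ν (σ + ρ)) := by
    intro ν; rw [B_add_right, chi_add, B_comm ρ ν]
  simp only [h1]
  rw [sum_C hσ.1 (by rw [B_add_left, hσ.2.2.2, hρ.2.2.2, add_zero]), four_pow]
  congr 2
  by_cases a : ρ = σ
  · subst a
    simp [E_add_self, Ne.symm hσ.1]
  · have h2 : σ + ρ ≠ 0 := fun h => a (E_eq_of_add h).symm
    have h3 : σ + ρ = τ ↔ ρ = σ + τ := by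
      constructor
      · rintro rfl
        rw [← add_assoc, E_add_self, zero_add]
      · rintro rfl
        rw [← add_assoc, E_add_self, zero_add]
    simp [a, h2, h3]

lemma hs_expand {x y : BMat q} (hx : x ∈ VScom q) :
    hs x y = 1 / 2 * ∑ τ, ∑ σ ∈ C τ, (starRingEnd ℂ) (hs (e τ σ) x) * hs (e τ σ) y := by
  conv_lhs => rw [recon' hx]
  have h2 : (starRingEnd ℂ) 2 = 2 := map_ofNat _ 2
  simp only [hs_smul_left, hs_sum_left]
  simp [h2]

lemma orth_ad {ε : ℂ} {x y : BMat q} (hx : x ∈ Vad q) (hy : y ∈ Veps q ε) : hs x y = 0 := by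
  rw [hs_expand hx.1, Finset.sum_eq_zero, mul_zero]
  intro τ _
  rcases (C τ).eq_empty_or_nonempty with h | ⟨σ₀, h⟩
  · rw [h, Finset.sum_empty]
  · rw [Finset.sum_congr rfl (fun σ hσ => by rw [hx.2 τ σ hσ σ₀ h]), ← Finset.mul_sum,
      (hy.2 τ).1, mul_zero]

lemma orth_eps {x y : BMat q} (hx : x ∈ Veps q 1) (hy : y ∈ Veps q (-1)) : hs x y = 0 := by
  rw [hs_expand hx.1, Finset.sum_eq_zero, mul_zero]
  intro τ _
  have h0 : (2 : ℂ) ^ q ≠ 0 := pow_ne_zero q two_ne_zero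
  have h1 : ∑ σ ∈ C τ, ∑ ν ∈ C τ,
      (starRingEnd ℂ) (hs (e τ σ) x) * (chi (B ν σ) * hs (e τ ν) y) =
      - 2 ^ q * ∑ σ ∈ C τ, (starRingEnd ℂ) (hs (e τ σ) x) * hs (e τ σ) y := by
    rw [Finset.mul_sum]
    refine Finset.sum_congr rfl fun σ hσ => ?_
    rw [← Finset.mul_sum, (hy.2 τ).2 σ hσ]; ring
  have h2 : ∑ σ ∈ C τ, ∑ ν ∈ C τ,
      (starRingEnd ℂ) (hs (e τ σ) x) * (chi (B ν σ) * hs (e τ ν) y) =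
      2 ^ q * ∑ σ ∈ C τ, (starRingEnd ℂ) (hs (e τ σ) x) * hs (e τ σ) y := by
    rw [Finset.sum_comm, Finset.mul_sum]
    refine Finset.sum_congr rfl fun ν hν => ?_
    have h3 := congrArg (starRingEnd ℂ) ((hx.2 τ).2 ν hν)
    simp only [map_sum, map_mul, chi_star, map_one, map_pow, map_ofNat, one_mul] at h3
    rw [← mul_assoc, ← h3, Finset.sum_mul]
    refine Finset.sum_congr rfl fun σ _ => ?_
    rw [B_comm ν σ]; ring
  have h3 := h1.symm.trans h2
  have h4 : (2 : ℂ) ^ q * ∑ σ ∈ C τ, (starRingEnd ℂ) (hs (e τ σ) x) * hs (e τ σ) y = 0 := by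
    linear_combination -(1 / 2) * h3
  exact (mul_eq_zero.1 h4).resolve_left h0

/-! invariance -/

lemma Act.C_image {U : Mat q} {g s} (h : Act U g s) (τ : E q) : C (g τ) = (C τ).image g := by
  ext x
  obtain ⟨y, rfl⟩ := (Finite.injective_iff_surjective.1 h.inj) x
  rw [h.mem_C, Finset.mem_image]
  constructor
  · exact fun hy => ⟨y, hy, rfl⟩
  · rintro ⟨z, hz, hzy⟩
    rwa [← h.inj hzy]

lemma Act.coord {U : Mat q} {g s} (h : Act U g s) (x : BMat q) (τ σ : E q) :
    hs (CliffordPaper.e (g τ) (g σ)) (twoCopy U x) = s τ * hs (CliffordPaper.e τ σ) x := by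
  rw [← hs_twoCopy h.uni (CliffordPaper.e τ σ) x, h.e, hs_smul_left, h.conj, ← mul_assoc, h.sq,
    one_mul]

lemma VScom_inv : IsInvariant q (VScom q) := by
  intro U hU x hx
  obtain ⟨g, s, h⟩ := Cliff_act hU
  rw [recon' hx]
  simp only [map_smul, map_sum]
  refine Submodule.smul_mem _ _ (Submodule.sum_mem _ fun τ _ => Submodule.sum_mem _ fun σ hσ =>
    Submodule.smul_mem _ _ ?_)
  rw [h.e]
  exact Submodule.smul_mem _ _ (e_mem (h.mem_C.2 hσ))

lemma Veps_inv (ε : ℂ) : IsInvariant q (Veps q ε) := by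
  intro U hU x hx
  obtain ⟨g, s, h⟩ := Cliff_act hU
  refine ⟨VScom_inv U hU x hx.1, fun τ' => ?_⟩
  obtain ⟨τ, rfl⟩ := (Finite.injective_iff_surjective.1 h.inj) τ'
  rw [h.C_image]
  constructor
  · rw [Finset.sum_image h.inj.injOn]
    simp only [h.coord, ← Finset.mul_sum, (hx.2 τ).1, mul_zero]
  · intro σ' hσ'
    obtain ⟨σ, hσ, rfl⟩ := Finset.mem_image.1 hσ'
    rw [Finset.sum_image h.inj.injOn]
    simp only [h.coord, h.B, mul_left_comm _ (s τ), ← Finset.mul_sum, (hx.2 τ).2 σ hσ]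

lemma Vad_inv : IsInvariant q (Vad q) := by
  intro U hU x hx
  obtain ⟨g, s, h⟩ := Cliff_act hU
  refine ⟨VScom_inv U hU x hx.1, fun τ' => ?_⟩
  obtain ⟨τ, rfl⟩ := (Finite.injective_iff_surjective.1 h.inj) τ'
  rw [h.C_image]
  intro σ' hσ' σ'' hσ''
  obtain ⟨σ, hσ, rfl⟩ := Finset.mem_image.1 hσ'
  obtain ⟨ρ, hρ, rfl⟩ := Finset.mem_image.1 hσ''
  rw [h.coord, h.coord, hx.2 τ σ hσ ρ hρ]

/-! scalars -/

def Comm (K : BMat q →ₗ[ℂ] BMat q) : Prop :=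
  ∀ U ∈ Cliff q, ∀ x, K (twoCopy U x) = twoCopy U (K x)

def ScalarType (W : Submodule ℂ (BMat q)) : Prop :=
  W ≤ VScom q ∧ IsInvariant q W ∧
    ∀ K : BMat q →ₗ[ℂ] BMat q, Comm K → ∃ c : ℂ, ∀ x ∈ W, K x ∈ VScom q → K x = c • x

lemma Veps_scalar (ε : ℂ) : ScalarType (Veps q ε) := by
  refine ⟨fun x hx => hx.1, Veps_inv ε, fun K hK => ?_⟩
  obtain ⟨α, β, γ, h⟩ := commutant K hK
  refine ⟨α + γ * (ε * 2 ^ q), fun x hx hKx => ?_⟩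
  refine ext_coord hKx (Submodule.smul_mem _ _ hx.1) fun τ σ hσ => ?_
  rw [h x hx.1 τ σ hσ, (hx.2 τ).1, (hx.2 τ).2 σ hσ, hs_smul_right]
  ring

lemma Vad_scalar : ScalarType (Vad q) := by
  refine ⟨fun x hx => hx.1, Vad_inv, fun K hK => ?_⟩
  obtain ⟨α, β, γ, h⟩ := commutant K hK
  refine ⟨α + β * ((4 : ℂ) ^ q / 2 - 2) + γ * (-2), fun x hx hKx => ?_⟩
  refine ext_coord hKx (Submodule.smul_mem _ _ hx.1) fun τ σ hσ => ?_
  have h1 : ∑ ν ∈ C τ, hs (e τ ν) x = ((4 : ℂ) ^ q / 2 - 2) * hs (e τ σ) x := by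
    rw [Finset.sum_congr rfl (fun ν hν => hx.2 τ ν hν σ hσ), Finset.sum_const, nsmul_eq_mul,
      card_C (mem_C.1 hσ).1]
  have h2 : ∑ ν ∈ C τ, chi (B ν σ) * hs (e τ ν) x = (-2) * hs (e τ σ) x := by
    rw [Finset.sum_congr rfl (fun ν hν => by rw [hx.2 τ ν hν σ hσ]), ← Finset.sum_mul,
      sum_C_mem hσ]
  rw [h x hx.1 τ σ hσ, h1, h2, hs_smul_right]
  ring

lemma exists_proj_comm {W : Submodule ℂ (BMat q)} (hW : IsInvariant q W) :
    ∃ K : BMat q →ₗ[ℂ] BMat q, Comm K ∧ (∀ x, K x ∈ W) ∧ (∀ x ∈ W, K x = x) := by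
  obtain ⟨K, h1, h2, h3⟩ := exists_proj W
  refine ⟨K, fun U hU x => ?_, h1, h2⟩
  obtain ⟨g, s, h⟩ := Cliff_act hU
  have hinj : Function.Injective (twoCopy U) := by
    rw [injective_iff_map_eq_zero]
    intro x hx
    apply hs_self
    rw [← hs_twoCopy h.uni, hx, hs_zero_left]
  have hmap : W.map (twoCopy U) = W := by
    apply Submodule.eq_of_le_of_finrank_eq
    · rw [Submodule.map_le_iff_le_comap]
      exact fun x hx => hW U hU x hx
    · exact (Submodule.equivMapOfInjective _ hinj W).finrank_eq.symm
  have hmem : K (twoCopy U x) - twoCopy U (K x) ∈ W :=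
    Submodule.sub_mem _ (h1 _) (hW U hU _ (h1 _))
  have horth : ∀ w ∈ W, hs w (K (twoCopy U x) - twoCopy U (K x)) = 0 := by
    intro w hw
    have ha := h3 (twoCopy U x) w hw
    have hb : hs w (twoCopy U x - twoCopy U (K x)) = 0 := by
      have hw' := hw
      rw [← hmap] at hw'
      obtain ⟨v, hv, rfl⟩ := hw'
      rw [← map_sub, hs_twoCopy h.uni]
      exact h3 x v hv
    rw [hs_sub_right] at *
    linear_combination hb - ha
  exact sub_eq_zero.1 (hs_self (horth _ hmem))

lemma irred_of_scalar {W : Submodule ℂ (BMat q)} (h : ScalarType W) (hne : W ≠ ⊥) :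
    CarriesIrred q W := by
  refine ⟨hne, h.2.1, fun W' hle hinv => ?_⟩
  obtain ⟨K, hK, h1, h2⟩ := exists_proj_comm hinv
  obtain ⟨c, hc⟩ := h.2.2 K hK
  by_cases h0 : W' = ⊥
  · exact Or.inl h0
  · right
    obtain ⟨w, hw, hw0⟩ := Submodule.exists_mem_ne_zero_of_ne_bot h0
    have hcw := hc w (hle hw) (h.1 (hle (h1 w)))
    rw [h2 w hw] at hcw
    have hc1 : c = 1 := by
      have h5 : (c - 1) • w = 0 := by rw [sub_smul, ← hcw, one_smul, sub_self]
      exact sub_eq_zero.1 ((smul_eq_zero.1 h5).resolve_right hw0)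
    refine le_antisymm hle fun x hx => ?_
    have := hc x hx (h.1 (hle (h1 x)))
    rw [hc1, one_smul] at this
    rw [← this]; exact h1 x

lemma not_equiv {W W' : Submodule ℂ (BMat q)} (h : ScalarType W) (hle : W' ≤ VScom q)
    (hne : W ≠ ⊥) (ho : ∀ x ∈ W, ∀ y ∈ W', hs x y = 0) : ¬ EquivRep q W W' := by
  rintro ⟨T, hT, hTinj, hTU⟩
  obtain ⟨K, hK, h1, h2⟩ := exists_proj_comm h.2.1
  have hTm : ∀ x ∈ W, T x ∈ W' := fun x hx => by
    rw [← hT]; exact Submodule.mem_map_of_mem hx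
  obtain ⟨c, hc⟩ := h.2.2 (T ∘ₗ K) (fun U hU x => by
    simp only [LinearMap.comp_apply]
    rw [hK U hU, hTU U hU _ (h1 x)])
  obtain ⟨w, hw, hw0⟩ := Submodule.exists_mem_ne_zero_of_ne_bot hne
  have h3 := hc w hw (hle (hTm _ (h1 w)))
  rw [LinearMap.comp_apply, h2 w hw] at h3
  have h4 := ho w hw _ (hTm w hw)
  rw [h3, hs_smul_right] at h4
  rcases mul_eq_zero.1 h4 with h5 | h5
  · rw [h5, zero_smul] at h3
    exact hw0 (hTinj w hw h3)
  · exact hw0 (hs_self h5)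

/-! the projections and dimensions -/

lemma N_ne (hq : 2 ≤ q) : (4 : ℂ) ^ q / 2 - 2 ≠ 0 := by
  intro h
  have h1 : (4 : ℂ) ^ q = 4 := by linear_combination 2 * h
  have h2 : (4 : ℕ) ^ q = 4 := by exact_mod_cast h1
  have h3 : 4 ^ 2 ≤ 4 ^ q := Nat.pow_le_pow_right (by norm_num) hq
  omega

def kap (ε : ℂ) (σ ν : E q) : ℂ :=
  1 / 4 * ((if ν = σ then 1 else 0) - 1 / ((4 : ℂ) ^ q / 2 - 2) +
    ε / 2 ^ q * (chi (B ν σ) + 2 / ((4 : ℂ) ^ q / 2 - 2)))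

def PiE (ε : ℂ) : BMat q →ₗ[ℂ] BMat q :=
  ∑ τ, ∑ σ ∈ C τ, ∑ ν ∈ C τ, (hsL (e τ ν)).smulRight (kap ε σ ν • e τ σ)

/-- coordinates after projection -/
def fE (ε : ℂ) (x : BMat q) (τ σ : E q) : ℂ :=
  1 / 2 * (hs (e τ σ) x - (∑ ν ∈ C τ, hs (e τ ν) x) / ((4 : ℂ) ^ q / 2 - 2) +
    ε / 2 ^ q * (∑ ν ∈ C τ, chi (B ν σ) * hs (e τ ν) x +
      2 * ((∑ ν ∈ C τ, hs (e τ ν) x) / ((4 : ℂ) ^ q / 2 - 2))))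

lemma PiE_eq (ε : ℂ) (x : BMat q) : PiE ε x = Rec (fE ε x) := by
  simp only [PiE, LinearMap.sum_apply, LinearMap.smulRight_apply, hsL_apply, Rec, Finset.smul_sum]
  refine Finset.sum_congr rfl fun τ _ => Finset.sum_congr rfl fun σ hσ => ?_
  simp only [smul_smul, ← Finset.sum_smul]
  congr 1
  have h1 : ∑ ν ∈ C τ, hs (e τ ν) x * kap ε σ ν = ∑ ν ∈ C τ, (
      1 / 4 * (if ν = σ then hs (e τ ν) x else 0)
      - (1 / 4 * (1 / ((4 : ℂ) ^ q / 2 - 2))) * hs (e τ ν) x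
      + (1 / 4 * (ε / 2 ^ q)) * (chi (B ν σ) * hs (e τ ν) x)
      + (1 / 4 * (ε / 2 ^ q * (2 / ((4 : ℂ) ^ q / 2 - 2)))) * hs (e τ ν) x) := by
    refine Finset.sum_congr rfl fun ν _ => ?_
    rw [kap]
    split_ifs <;> ring
  rw [h1, Finset.sum_add_distrib, Finset.sum_add_distrib, Finset.sum_sub_distrib,
    ← Finset.mul_sum, ← Finset.mul_sum, ← Finset.mul_sum, ← Finset.mul_sum, Finset.sum_ite_eq',
    if_pos hσ, fE]
  ring

lemma PiE_coord (ε : ℂ) (x : BMat q) {τ σ : E q} (h : σ ∈ C τ) :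
    hs (e τ σ) (PiE ε x) = fE ε x τ σ := by
  have h1 : fE ε x τ (σ + τ) = fE ε x τ σ := by
    have h2 : ∑ ν ∈ C τ, chi (B ν (σ + τ)) * hs (e τ ν) x =
        ∑ ν ∈ C τ, chi (B ν σ) * hs (e τ ν) x := by
      refine Finset.sum_congr rfl fun ν hν => ?_
      rw [B_add_right, (mem_C.1 hν).2.2.2, add_zero]
    rw [fE, fE, coord_swap x h, h2]
  rw [PiE_eq, hs_Rec _ h, h1]; ring

lemma sum_H (x : BMat q) (τ : E q) :
    ∑ σ ∈ C τ, ∑ ν ∈ C τ, chi (B ν σ) * hs (e τ ν) x = -2 * ∑ ν ∈ C τ, hs (e τ ν) x := by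
  rw [Finset.sum_comm, Finset.mul_sum]
  refine Finset.sum_congr rfl fun ν hν => ?_
  rw [← Finset.sum_mul, sum_C_mem' hν]

lemma sum_HH (x : BMat q) {τ σ : E q} (h : σ ∈ C τ) :
    ∑ ν ∈ C τ, chi (B ν σ) * ∑ ρ ∈ C τ, chi (B ρ ν) * hs (e τ ρ) x =
      2 ^ q * 2 ^ q * hs (e τ σ) x - 2 * ∑ ν ∈ C τ, hs (e τ ν) x := by
  simp only [Finset.mul_sum]
  rw [Finset.sum_comm, ← Finset.mul_sum]
  have h1 : ∀ ρ ∈ C τ, ∑ ν ∈ C τ, chi (B ν σ) * (chi (B ρ ν) * hs (e τ ρ) x) =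
      (2 ^ q * 2 ^ q / 2) * (if ρ = σ ∨ ρ = σ + τ then hs (e τ ρ) x else 0)
        - 2 * hs (e τ ρ) x := by
    intro ρ hρ
    simp only [← mul_assoc]
    rw [← Finset.sum_mul, sum_C_mem2 h hρ]
    split_ifs <;> ring
  rw [Finset.sum_congr rfl h1, Finset.sum_sub_distrib, ← Finset.mul_sum, ← Finset.mul_sum,
    sum_pair h, coord_swap x h]
  ring

lemma PiE_mem (hq : 2 ≤ q) {ε : ℂ} (hε : ε * ε = 1) (x : BMat q) : PiE ε x ∈ Veps q ε := by
  have hN := N_ne hq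
  have h0 : (2 : ℂ) ^ q ≠ 0 := pow_ne_zero q two_ne_zero
  refine ⟨by rw [PiE_eq]; exact Rec_mem _, fun τ => ?_⟩
  have hcong : ∀ ν ∈ C τ, hs (e τ ν) (PiE ε x) = fE ε x τ ν := fun ν hν => PiE_coord ε x hν
  rcases eq_or_ne τ 0 with rfl | hτ
  · have : C (0 : E q) = ∅ := by
      ext; simp [mem_C]
    simp [this]
  have hcard := card_C hτ
  generalize hS : ∑ ν ∈ C τ, hs (e τ ν) x = S
  constructor
  · rw [Finset.sum_congr rfl hcong]
    show ∑ ν ∈ C τ, fE ε x τ ν = 0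
    simp only [fE, hS]
    rw [← Finset.mul_sum, Finset.sum_add_distrib, Finset.sum_sub_distrib, ← Finset.mul_sum,
      Finset.sum_add_distrib, sum_H, hS, Finset.sum_const, Finset.sum_const, nsmul_eq_mul,
      nsmul_eq_mul, hcard]
    clear hcong hS hcard
    generalize (4 : ℂ) ^ q / 2 - 2 = N at *
    field_simp
    ring
  · intro σ hσ
    rw [Finset.sum_congr rfl (fun ν hν => by rw [hcong ν hν]), hcong σ hσ]
    have h1 : ∑ ν ∈ C τ, chi (B ν σ) * fE ε x τ ν =
        1 / 2 * ((∑ ν ∈ C τ, chi (B ν σ) * hs (e τ ν) x)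
          - (S / ((4 : ℂ) ^ q / 2 - 2)) * ∑ ν ∈ C τ, chi (B ν σ)
          + ε / 2 ^ q * ((∑ ν ∈ C τ, chi (B ν σ) * ∑ ρ ∈ C τ, chi (B ρ ν) * hs (e τ ρ) x) +
            2 * (S / ((4 : ℂ) ^ q / 2 - 2)) * ∑ ν ∈ C τ, chi (B ν σ))) := by
      simp only [fE, hS]
      rw [Finset.mul_sum (C τ) _ (S / _), Finset.mul_sum (C τ) _ (2 * _),
        ← Finset.sum_add_distrib, Finset.mul_sum (C τ) _ (ε / _), ← Finset.sum_sub_distrib,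
        ← Finset.sum_add_distrib, Finset.mul_sum (C τ) _ (1 / 2)]
      exact Finset.sum_congr rfl fun ν _ => by ring
    rw [h1, sum_C_mem hσ, sum_HH x hσ, hS, fE, hS]
    generalize ∑ ν ∈ C τ, chi (B ν σ) * hs (e τ ν) x = H
    rw [four_pow] at *
    generalize (2 : ℂ) ^ q = D at *
    have hM : ∃ M, S = (D * D / 2 - 2) * M := ⟨S / (D * D / 2 - 2), (mul_div_cancel₀ S hN).symm⟩
    obtain ⟨M, rfl⟩ := hM
    rw [mul_div_cancel_left₀ _ hN]
    generalize hs (e τ σ) x = a at *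
    clear h1 hcong hS
    field_simp
    linear_combination (-(D * H) - 2 * D * M) * hε

lemma PiE_proj (hq : 2 ≤ q) {ε : ℂ} (hε : ε * ε = 1) :
    LinearMap.IsProj (Veps q ε) (PiE ε) := by
  refine ⟨PiE_mem hq hε, fun x hx => ?_⟩
  have h0 : (2 : ℂ) ^ q ≠ 0 := pow_ne_zero q two_ne_zero
  refine ext_coord (PiE_mem hq hε x).1 hx.1 fun τ σ hσ => ?_
  rw [PiE_coord ε x hσ, fE, (hx.2 τ).1, (hx.2 τ).2 σ hσ]
  generalize (2 : ℂ) ^ q = D at *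
  field_simp
  linear_combination D * hs (e τ σ) x * hε

lemma PiE_trace (hq : 2 ≤ q) (ε : ℂ) : LinearMap.trace ℂ (BMat q) (PiE ε) =
    (4 ^ q - 1) * ((4 : ℂ) ^ q / 2 - 4 + ε * 2 ^ q) / 4 := by
  have hN := N_ne hq
  have h0 : (2 : ℂ) ^ q ≠ 0 := pow_ne_zero q two_ne_zero
  simp only [PiE, map_sum, LinearMap.trace_smulRight, hsL_apply, hs_smul_right]
  have h1 : ∀ τ : E q, ∑ σ ∈ C τ, ∑ ν ∈ C τ, kap ε σ ν * hs (e τ ν) (e τ σ) =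
      if τ = 0 then 0 else ((4 : ℂ) ^ q / 2 - 4 + ε * 2 ^ q) / 4 := by
    intro τ
    split_ifs with hτ
    · have : C τ = ∅ := by
        ext; simp [mem_C, hτ]
      simp [this]
    · have h2 : ∀ σ ∈ C τ, ∑ ν ∈ C τ, kap ε σ ν * hs (e τ ν) (e τ σ) =
          1 / 4 * (1 - 2 / ((4 : ℂ) ^ q / 2 - 2) +
            ε / 2 ^ q * (2 + 4 / ((4 : ℂ) ^ q / 2 - 2))) := by
        intro σ hσ
        have h3 : ∀ ν ∈ C τ, kap ε σ ν * hs (e τ ν) (e τ σ) =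
            if ν = σ ∨ ν = σ + τ then kap ε σ ν else 0 := by
          intro ν hν
          rw [gram hν hσ]
          simp only [true_and, pair_symm (σ := σ)]
          split_ifs <;> simp
        rw [Finset.sum_congr rfl h3, sum_pair hσ]
        have h4 : ¬ (σ + τ = σ) := fun h => hτ (by simpa using h)
        rw [kap, kap, if_pos rfl, if_neg h4, B_add_left, B_self, B_comm τ σ,
          (mem_C.1 hσ).2.2.2, add_zero, chi_zero]
        ring
      rw [Finset.sum_congr rfl h2, Finset.sum_const, nsmul_eq_mul, card_C hτ]
      rw [four_pow] at *
      clear h2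
      generalize (2 : ℂ) ^ q = D at *
      have hD : D * D / 2 = (D * D / 2 - 2) + 2 := by ring
      generalize D * D / 2 - 2 = N at *
      rw [hD]
      field_simp
      linear_combination -2 * ε * hD
  rw [Finset.sum_congr rfl fun τ _ => h1 τ]
  generalize ((4 : ℂ) ^ q / 2 - 4 + ε * 2 ^ q) = a
  have h2 : ∀ τ : E q, (if τ = 0 then 0 else a / 4) = a / 4 - if τ = 0 then a / 4 else 0 := by
    intro τ; split_ifs <;> simp
  simp only [h2]
  rw [Finset.sum_sub_distrib, Finset.sum_const, Finset.sum_ite_eq' , if_pos (Finset.mem_univ _),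
    Finset.card_univ, nsmul_eq_mul]
  have h3 : (Fintype.card (E q) : ℂ) = 4 ^ q := by
    simp [E]
  rw [h3]; ring

end Final

section Last
variable {q : ℕ}

lemma finrank_cast (hq : 2 ≤ q) {ε : ℂ} (hε : ε * ε = 1) :
    (Module.finrank ℂ (Veps q ε) : ℂ) = (4 ^ q - 1) * ((4 : ℂ) ^ q / 2 - 4 + ε * 2 ^ q) / 4 := by
  rw [← PiE_trace hq ε, (PiE_proj hq hε).trace]

lemma finrank_one (hq : 2 ≤ q) : Module.finrank ℂ (Veps q 1) =
    (2 ^ (2 * q) - 1) * (2 ^ q / 2 * (2 ^ q / 2 + 1) / 2 - 1) := by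
  have h := finrank_cast hq (ε := 1) (by norm_num)
  obtain ⟨k, rfl⟩ : ∃ k, q = k + 1 := ⟨q - 1, by omega⟩
  have hm : 2 ^ (k + 1) / 2 = 2 ^ k := by rw [pow_succ]; omega
  have h4 : (4 : ℂ) ^ (k + 1) = 4 * (2 ^ k * 2 ^ k) := by
    rw [pow_succ, ← mul_pow]; norm_num; ring
  have h2 : 2 ^ (2 * (k + 1)) = 4 * (2 ^ k * 2 ^ k) := by ring
  obtain ⟨t, ht⟩ := (Nat.even_mul_succ_self (2 ^ k))
  have hk : 2 ^ 1 ≤ 2 ^ k := Nat.pow_le_pow_right (by norm_num) (by omega)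
  rw [hm, h2, show 2 ^ k * (2 ^ k + 1) / 2 = t by omega]
  rw [h4, pow_succ 2 k] at h
  have ht' : (2 : ℂ) ^ k * (2 ^ k + 1) = t + t := by exact_mod_cast ht
  have h1 : 1 ≤ t := by nlinarith
  have h1' : 1 ≤ 4 * (2 ^ k * 2 ^ k) := by nlinarith
  have : (Module.finrank ℂ (Veps (k + 1) 1) : ℂ) =
      (((4 * (2 ^ k * 2 ^ k) - 1) * (t - 1) : ℕ) : ℂ) := by
    rw [h]
    push_cast [Nat.cast_sub h1, Nat.cast_sub h1']
    linear_combination (4 * (2 ^ k * 2 ^ k) - 1) / 2 * ht'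
  exact_mod_cast this

lemma finrank_neg (hq : 2 ≤ q) : Module.finrank ℂ (Veps q (-1)) =
    (2 ^ (2 * q) - 1) * (2 ^ q / 2 * (2 ^ q / 2 - 1) / 2 - 1) := by
  have h := finrank_cast hq (ε := -1) (by norm_num)
  obtain ⟨k, rfl⟩ : ∃ k, q = k + 1 := ⟨q - 1, by omega⟩
  have hm : 2 ^ (k + 1) / 2 = 2 ^ k := by rw [pow_succ]; omega
  have h4 : (4 : ℂ) ^ (k + 1) = 4 * (2 ^ k * 2 ^ k) := by
    rw [pow_succ, ← mul_pow]; norm_num; ring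
  have h2 : 2 ^ (2 * (k + 1)) = 4 * (2 ^ k * 2 ^ k) := by ring
  obtain ⟨t, ht⟩ := (Nat.even_mul_pred_self (2 ^ k))
  have hk : 2 ^ 1 ≤ 2 ^ k := Nat.pow_le_pow_right (by norm_num) (by omega)
  rw [hm, h2, show 2 ^ k * (2 ^ k - 1) / 2 = t by omega]
  rw [h4, pow_succ 2 k] at h
  have hk1 : 1 ≤ 2 ^ k := Nat.one_le_two_pow
  have ht' : (2 : ℂ) ^ k * (2 ^ k - 1) = t + t := by
    have : ((2 ^ k * (2 ^ k - 1) : ℕ) : ℂ) = ((t + t : ℕ) : ℂ) := by rw [ht]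
    push_cast [Nat.cast_sub hk1] at this
    exact this
  have h1 : 1 ≤ t := by
    have : 2 * 1 ≤ 2 ^ k * (2 ^ k - 1) := Nat.mul_le_mul (by omega) (by omega)
    omega
  have h1' : 1 ≤ 4 * (2 ^ k * 2 ^ k) := by nlinarith
  have : (Module.finrank ℂ (Veps (k + 1) (-1)) : ℂ) =
      (((4 * (2 ^ k * 2 ^ k) - 1) * (t - 1) : ℕ) : ℂ) := by
    rw [h]
    push_cast [Nat.cast_sub h1, Nat.cast_sub h1']
    linear_combination (4 * (2 ^ k * 2 ^ k) - 1) / 2 * ht'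
  exact_mod_cast this

lemma ne_bot_of_finrank {W : Submodule ℂ (BMat q)} (h : Module.finrank ℂ W ≠ 0) : W ≠ ⊥ := by
  rintro rfl
  simp at h

lemma pow_aux (hq : 2 ≤ q) : 2 ^ (2 * q) - 1 ≠ 0 := by
  have : 2 ^ 1 ≤ 2 ^ (2 * q) := Nat.pow_le_pow_right (by norm_num) (by omega)
  omega

lemma one_ne_bot (hq : 2 ≤ q) : Veps q 1 ≠ ⊥ := by
  refine ne_bot_of_finrank ?_
  rw [finrank_one hq]
  refine mul_ne_zero (pow_aux hq) ?_
  have h : 2 ^ 2 ≤ 2 ^ q := Nat.pow_le_pow_right (by norm_num) hq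
  have h2 : 2 ≤ 2 ^ q / 2 := by omega
  have : 2 * 3 ≤ 2 ^ q / 2 * (2 ^ q / 2 + 1) := Nat.mul_le_mul h2 (by omega)
  omega

lemma neg_ne_bot (hq : 3 ≤ q) : Veps q (-1) ≠ ⊥ := by
  refine ne_bot_of_finrank ?_
  rw [finrank_neg (by omega)]
  refine mul_ne_zero (pow_aux (by omega)) ?_
  have h : 2 ^ 3 ≤ 2 ^ q := Nat.pow_le_pow_right (by norm_num) hq
  have h2 : 4 ≤ 2 ^ q / 2 := by omega
  have : 4 * 3 ≤ 2 ^ q / 2 * (2 ^ q / 2 - 1) := Nat.mul_le_mul h2 (by omega)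
  omega

lemma neg_two : Veps 2 (-1) = ⊥ := by
  rw [← Submodule.finrank_eq_zero, finrank_neg le_rfl]
  norm_num

/-! the adjoint sector -/

def uu (τ : E q) : BMat q := ∑ σ ∈ C τ, e τ σ

lemma uu_mem (τ : E q) : uu τ ∈ VScom q := Submodule.sum_mem _ fun _ h => e_mem h

lemma hs_uu {τ τ' σ : E q} (h : σ ∈ C τ') : hs (e τ' σ) (uu τ) = if τ' = τ then 2 else 0 := by
  rw [uu, hs_sum_right, Finset.sum_congr rfl fun σ' h' => gram h h']
  split_ifs with ht
  · subst ht
    simp only [true_and]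
    rw [sum_pair h (fun _ => (1 : ℂ))]; norm_num
  · simp [ht]

lemma uu_Vad (τ : E q) : uu τ ∈ Vad q :=
  ⟨uu_mem τ, fun τ' σ h σ' h' => by rw [hs_uu h, hs_uu h']⟩

lemma vadjS_p {τ : E q} (hτ : τ ≠ 0) : vadjS (p τ) =
    ((Real.sqrt (2 * ((C τ).card : ℝ)) : ℂ))⁻¹ • uu τ := by
  rw [vadjS, CSet_p hτ, Set.ncard_image_of_injective _ p_inj, Set.ncard_coe_finset,
    finsum_mem_image p_inj.injOn, finsum_mem_coe_finset]
  rfl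

lemma C_nonempty (hq : 2 ≤ q) {τ : E q} (hτ : τ ≠ 0) : (C τ).card ≠ 0 := by
  intro h
  have := card_C hτ
  rw [h, Nat.cast_zero] at this
  exact N_ne hq this.symm

lemma VadjS_eq (hq : 2 ≤ q) : VadjS q = Vad q := by
  apply le_antisymm
  · rw [VadjS, Submodule.span_le]
    rintro M ⟨t, ht, rfl⟩
    obtain ⟨τ, hτ, rfl⟩ := (mem_sigmaSet _).1 ht
    rw [vadjS_p hτ]
    exact Submodule.smul_mem _ _ (uu_Vad τ)
  · intro x hx
    rw [recon' hx.1]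
    refine Submodule.smul_mem _ _ (Submodule.sum_mem _ fun τ _ => ?_)
    rcases (C τ).eq_empty_or_nonempty with h | ⟨σ₀, h⟩
    · rw [h, Finset.sum_empty]; exact Submodule.zero_mem _
    · rw [Finset.sum_congr rfl fun σ hσ => by rw [hx.2 τ σ hσ σ₀ h], ← Finset.smul_sum]
      refine Submodule.smul_mem _ _ ?_
      have hτ := (mem_C.1 h).1
      have hc := C_nonempty hq hτ
      have h1 : uu τ = (Real.sqrt (2 * ((C τ).card : ℝ)) : ℂ) • vadjS (p τ) := by
        rw [vadjS_p hτ, smul_smul, mul_inv_cancel₀, one_smul]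
        have : (0 : ℝ) < (C τ).card := by exact_mod_cast Nat.pos_of_ne_zero hc
        exact_mod_cast (Real.sqrt_pos.2 (by positivity)).ne'
      change uu τ ∈ _
      rw [h1]
      exact Submodule.smul_mem _ _ (Submodule.subset_span ⟨_, (mem_sigmaSet _).2 ⟨τ, hτ, rfl⟩, rfl⟩)

lemma Vad_ne_bot (hq : 2 ≤ q) : Vad q ≠ ⊥ := by
  have hτ : (Pi.single ⟨0, by omega⟩ (1, 0) : E q) ≠ 0 := by
    intro h
    have := congrFun h ⟨0, by omega⟩
    simp at this
  obtain ⟨σ, hσ⟩ := Finset.card_pos.1 (Nat.pos_of_ne_zero (C_nonempty hq hτ))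
  intro h
  have h1 := uu_Vad (Pi.single ⟨0, by omega⟩ (1, 0) : E q)
  rw [h, Submodule.mem_bot] at h1
  have h2 := hs_uu (τ := Pi.single ⟨0, by omega⟩ (1, 0)) hσ
  rw [h1, if_pos rfl] at h2
  simp [hs] at h2

lemma decomp (hq : 2 ≤ q) : VScom q = VadjS q ⊔ Veps q 1 ⊔ Veps q (-1) := by
  rw [VadjS_eq hq]
  apply le_antisymm
  · intro x hx
    have h1 := PiE_mem hq (ε := 1) (by norm_num) x
    have h2 := PiE_mem hq (ε := -1) (by norm_num) x
    have h3 : x - PiE 1 x - PiE (-1) x ∈ Vad q := by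
      have hc : ∀ τ, ∀ σ ∈ C τ, hs (e τ σ) (x - PiE 1 x - PiE (-1) x) =
          (∑ ν ∈ C τ, hs (e τ ν) x) / ((4 : ℂ) ^ q / 2 - 2) := by
        intro τ σ hσ
        rw [hs_sub_right, hs_sub_right, PiE_coord _ _ hσ, PiE_coord _ _ hσ, fE, fE]
        ring
      refine ⟨Submodule.sub_mem _ (Submodule.sub_mem _ hx h1.1) h2.1, fun τ σ h σ' h' => ?_⟩
      rw [hc τ σ h, hc τ σ' h']
    have h4 : x = (x - PiE 1 x - PiE (-1) x) + PiE 1 x + PiE (-1) x := by abel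
    rw [h4]
    exact Submodule.add_mem_sup (Submodule.add_mem_sup h3 h1) h2
  · exact sup_le (sup_le (fun x hx => hx.1) fun x hx => hx.1) fun x hx => hx.1

lemma VScom_one : VScom 1 = ⊥ := by
  rw [VScom_eq, Submodule.span_eq_bot]
  rintro M ⟨τ, σ, h, -⟩
  have h1 := card_C (mem_C.1 h).1
  norm_num at h1
  rw [h1] at h
  simp at h

end Last

/-- symmetric commuting sector: for `q ≥ 3` there are invariant
irreducible `V_[1]`, `V_[2]` with the stated dimensions such that
`V_[S] = V_[adj] ⊕ V_[1] ⊕ V_[2]` orthogonally, the three pieces being pairwise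
inequivalent; for `q = 2` the same with `V_[2] = 0`; for `q = 1`, `V_[S] = 0`. -/
theorem statement15 (q : ℕ) (hq : 1 ≤ q) :
    (3 ≤ q →
      ∃ V1s V2s : Submodule ℂ (BMat q),
        IsInvariant q V1s ∧ IsInvariant q V2s ∧
        CarriesIrred q V1s ∧ CarriesIrred q V2s ∧
        CarriesIrred q (VadjS q) ∧
        Module.finrank ℂ ↥V1s =
          (2 ^ (2 * q) - 1) * (2 ^ q / 2 * (2 ^ q / 2 + 1) / 2 - 1) ∧
        Module.finrank ℂ ↥V2s =
          (2 ^ (2 * q) - 1) * (2 ^ q / 2 * (2 ^ q / 2 - 1) / 2 - 1) ∧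
        VScom q = VadjS q ⊔ V1s ⊔ V2s ∧
        (∀ x ∈ VadjS q, ∀ y ∈ V1s, hs x y = 0) ∧
        (∀ x ∈ VadjS q, ∀ y ∈ V2s, hs x y = 0) ∧
        (∀ x ∈ V1s, ∀ y ∈ V2s, hs x y = 0) ∧
        ¬ EquivRep q (VadjS q) V1s ∧ ¬ EquivRep q (VadjS q) V2s ∧
        ¬ EquivRep q V1s V2s) ∧
    (q = 2 →
      ∃ V1s : Submodule ℂ (BMat q),
        IsInvariant q V1s ∧ CarriesIrred q V1s ∧ CarriesIrred q (VadjS q) ∧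
        Module.finrank ℂ ↥V1s =
          (2 ^ (2 * q) - 1) * (2 ^ q / 2 * (2 ^ q / 2 + 1) / 2 - 1) ∧
        VScom q = VadjS q ⊔ V1s ∧
        (∀ x ∈ VadjS q, ∀ y ∈ V1s, hs x y = 0) ∧
        ¬ EquivRep q (VadjS q) V1s) ∧
    (q = 1 → VScom q = ⊥) := by
  refine ⟨fun h3 => ?_, fun h2 => ?_, fun h1 => ?_⟩
  · have h2 : 2 ≤ q := by omega
    have hd := decomp h2
    have hA := VadjS_eq h2
    rw [hA] at hd ⊢
    have hA0 := Vad_ne_bot h2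
    exact ⟨Veps q 1, Veps q (-1), Veps_inv 1, Veps_inv (-1),
      irred_of_scalar (Veps_scalar 1) (one_ne_bot h2),
      irred_of_scalar (Veps_scalar (-1)) (neg_ne_bot h3),
      irred_of_scalar Vad_scalar hA0, finrank_one h2, finrank_neg h2, hd,
      fun x hx y hy => orth_ad hx hy, fun x hx y hy => orth_ad hx hy,
      fun x hx y hy => orth_eps hx hy,
      not_equiv Vad_scalar (fun x hx => hx.1) hA0 fun x hx y hy => orth_ad hx hy,
      not_equiv Vad_scalar (fun x hx => hx.1) hA0 fun x hx y hy => orth_ad hx hy,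
      not_equiv (Veps_scalar 1) (fun x hx => hx.1) (one_ne_bot h2)
        fun x hx y hy => orth_eps hx hy⟩
  · subst h2
    have hd := decomp (q := 2) le_rfl
    have hA := VadjS_eq (q := 2) le_rfl
    rw [neg_two, sup_bot_eq] at hd
    rw [hA] at hd ⊢
    have hA0 := Vad_ne_bot (q := 2) le_rfl
    exact ⟨Veps 2 1, Veps_inv 1, irred_of_scalar (Veps_scalar 1) (one_ne_bot le_rfl),
      irred_of_scalar Vad_scalar hA0, finrank_one le_rfl, hd,
      fun x hx y hy => orth_ad hx hy,
      not_equiv Vad_scalar (fun x hx => hx.1) hA0 fun x hx y hy => orth_ad hx hy⟩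
  · subst h1
    exact VScom_one


end CliffordPaper
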